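/- Let Φ = B_n, C_n or D_n, let I ⊆ Δ, and let λ, μ ∈ Λ_I⁺ with μ = w s_βλ for some w ∈ W_I and β ∈ Ψ_λ⁺⁺. Then c(λ,μ) = 0 if and only if one of the following holds: (i) Φ = B_n (resp. C_n), β = e_i (resp. 2e_i) or β = e_i + e_j with q_{s−1} < i ≤ q_s ≤ q_{m−1} < j ≤ n for some 1 ≤ s < m; moreover λ_i = λ_j ∈ (1/2)ℤ_{>0} (resp. λ_i = λ_j ∈ ℤ_{>0}) and λ_k ∉ {0, −λ_i} for all q_{s−1} < k ≤ q_s; (ii) Φ = B_n (resp. C_n), β = e_i (resp. 2e_i) or β = e_i + e_j with q_{s−1} < i < j ≤ q_s for some 1 ≤ s < m; moreover λ_i ∈ ℤ_{>0}, λ_j = 0, λ_k ≠ −λ_i for all q_{s−1} < k ≤ q_s, and λ_l ≠ λ_i for all q_{m−1} < l ≤ n; (iii) Φ = D_n, β = e_i + e_j or β = e_i + e_k with q_{s−1} < i < j ≤ q_s ≤ q_{m−1} < k < n for some 1 ≤ s < m; moreover λ_i = λ_k ∈ ℤ_{>0}, λ_j = λ_n = 0, and λ_l ≠ −λ_i for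 all q_{s−1} < l ≤ q_s. -/

import Mathlib

open scoped RealInnerProductSpace
open Classical

noncomputable section

namespace JantzenGVM

variable {V : Type*} [NormedAddCommGroup V] [InnerProductSpace ℝ V] [FiniteDimensional ℝ V]

/-- The coroot `α^∨ = 2α/⟨α,α⟩` of a vector `α` (junk value `0` when `α = 0`). -/
def coroot (α : V) : V := (2 / ⟪α, α⟫) • α

/-- The linear functional `v ↦ ⟨v, α^∨⟩`. -/
def corootForm (α : V) : V →ₗ[ℝ] ℝ where
  toFun v := ⟪v, coroot α⟫
  map_add' x y := by simp [inner_add_left]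
  map_smul' c x := by simp [inner_smul_left]

lemma corootForm_self {α : V} (h : ⟪α, α⟫ ≠ 0) : corootForm α α = 2 := by
  simp only [corootForm, coroot, LinearMap.coe_mk, AddHom.coe_mk, real_inner_smul_right]
  field_simp

/-- The reflection `s_α` as a linear automorphism of `V` (the identity when `⟨α,α⟩ = 0`). -/
def reflV (α : V) : V ≃ₗ[ℝ] V :=
  if h : ⟪α, α⟫ = 0 then LinearEquiv.refl ℝ V
  else Module.reflection (corootForm_self h)

/-- `h* = ℂ ⊗ V`, realized as the space of real-linear functionals `V → ℂ` via the
inner product; an element `λ` pairs with a root `α` by `⟨λ, α⟩ = λ α` and with the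
coroot by `⟨λ, α^∨⟩ = λ (coroot α)`. -/
abbrev HStar (V : Type*) [NormedAddCommGroup V] [InnerProductSpace ℝ V] := V →ₗ[ℝ] ℂ

/-- The canonical embedding of `V` into `h*`. -/
def emb (α : V) : HStar V where
  toFun v := (⟪α, v⟫ : ℂ)
  map_add' x y := by simp [inner_add_right]
  map_smul' c x := by simp [inner_smul_right, Complex.real_smul]

/-- The action of a linear automorphism `w` of `V` on `h*`: `(w • λ)(v) = λ(w⁻¹ v)`. -/
def wAct (w : V ≃ₗ[ℝ] V) (l : HStar V) : HStar V := l ∘ₗ (w.symm : V →ₗ[ℝ] V)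

/-- The reflection `s_β λ = λ - ⟨λ, β^∨⟩ β` acting on `h*`. -/
def sRefl (β : V) (l : HStar V) : HStar V := l - l (coroot β) • emb β

/-- The group generated by the reflections in the elements of `Φ'`. -/
def weyl (Φ' : Set V) : Subgroup (V ≃ₗ[ℝ] V) :=
  Subgroup.closure {w | ∃ α ∈ Φ', w = reflV α}

/-- A finite, reduced, crystallographic root system spanning the Euclidean space `V`,
together with a choice of positive system and the corresponding simple system. -/
structure RootSys (V : Type*) [NormedAddCommGroup V] [InnerProductSpace ℝ V]
    [FiniteDimensional ℝ V] where
  Φ : Finset V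
  pos : Finset V
  Δ : Finset V
  ne_zero : ∀ α ∈ Φ, α ≠ (0 : V)
  span_eq_top : Submodule.span ℝ (Φ : Set V) = ⊤
  reduced : ∀ α ∈ Φ, ∀ c : ℝ, c • α ∈ Φ → c = 1 ∨ c = -1
  refl_mem : ∀ α ∈ Φ, ∀ β ∈ Φ, reflV α β ∈ Φ
  crystallographic : ∀ α ∈ Φ, ∀ β ∈ Φ, ∃ n : ℤ, ⟪β, coroot α⟫ = (n : ℝ)
  pos_subset : pos ⊆ Φ
  mem_pos_or : ∀ α ∈ Φ, α ∈ pos ∨ -α ∈ pos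
  not_both : ∀ α ∈ pos, -α ∉ pos
  simple_subset : Δ ⊆ pos
  simple_indep : LinearIndependent ℝ (fun x : {a : V // a ∈ Δ} => x.1)
  simple_gen : ∀ β ∈ pos, ∃ c : V → ℝ, (∀ α ∈ Δ, 0 ≤ c α) ∧ β = ∑ α ∈ Δ, c α • α

/-- A subsystem of the root system: a subset of `Φ` closed under its own reflections. -/
def IsSubsystem (S : RootSys V) (Φ' : Set V) : Prop :=
  Φ' ⊆ (S.Φ : Set V) ∧ ∀ α ∈ Φ', ∀ β ∈ Φ', reflV α β ∈ Φ'

/-- The length of `w`, i.e. the number of positive roots sent to negative roots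
(this equals the Coxeter length for elements of the Weyl group). -/
def len (S : RootSys V) (w : V ≃ₗ[ℝ] V) : ℕ :=
  {β ∈ (S.pos : Set V) | w β ∉ (S.pos : Set V)}.ncard

/-- `Φ_I = ℤI ∩ Φ`, the subsystem generated by a subset `I` of the simple roots. -/
def PhiI (S : RootSys V) (I : Finset V) : Set V :=
  {α ∈ (S.Φ : Set V) | α ∈ Submodule.span ℤ (I : Set V)}

/-- `z` is a positive integer. -/
def IsPosInt (z : ℂ) : Prop := ∃ n : ℤ, 0 < n ∧ z = (n : ℂ)

/-- `z` is an integer. -/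
def IsInt (z : ℂ) : Prop := ∃ n : ℤ, z = (n : ℂ)

/-- `Λ_I⁺ = {λ ∈ h* : ⟨λ, α^∨⟩ ∈ ℤ_{>0} for all α ∈ I}`. -/
def LambdaP (I : Set V) : Set (HStar V) :=
  {l | ∀ α ∈ I, IsPosInt (l (coroot α))}

/-- `Λ⁺(Φ'', Φ') = {ν ∈ ℂΦ' : ⟨ν, α^∨⟩ ∈ ℤ_{>0} for all α ∈ Φ'' ∩ Φ⁺}`. -/
def LambdaPSub (S : RootSys V) (Φ'' Φ' : Set V) : Set (HStar V) :=
  {l | l ∈ Submodule.span ℂ (emb '' Φ') ∧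
       ∀ α ∈ Φ'' ∩ (S.pos : Set V), IsPosInt (l (coroot α))}

/-- `λ` is `Φ''`-regular: `⟨λ, α⟩ ≠ 0` for all `α ∈ Φ''`. -/
def IsRegularOn (Φ'' : Set V) (l : HStar V) : Prop := ∀ α ∈ Φ'', l α ≠ 0

/-- `Ψ⁺(λ, Φ'', Φ') = {β ∈ (Φ' ∩ Φ⁺) \ Φ'' : ⟨λ, β^∨⟩ ∈ ℤ_{>0}}`. -/
def PsiP (S : RootSys V) (Φ'' Φ' : Set V) (l : HStar V) : Set V :=
  {β | β ∈ Φ' ∩ (S.pos : Set V) ∧ β ∉ Φ'' ∧ IsPosInt (l (coroot β))}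

/-- `Ψ⁺⁺(λ, Φ'', Φ') = {β ∈ Ψ⁺(λ, Φ'', Φ') : s_β λ is Φ''-regular}`. -/
def PsiPP (S : RootSys V) (Φ'' Φ' : Set V) (l : HStar V) : Set V :=
  {β ∈ PsiP S Φ'' Φ' l | ∀ α ∈ Φ'', (sRefl β l) α ≠ 0}

/-- The sign function: `sgn(λ, μ) = (-1)^{ℓ(w)}` if `λ, μ` are `Φ''`-regular and
`μ = wλ` for some `w ∈ W(Φ'')`, and `0` otherwise. -/
def sgnW (S : RootSys V) (Φ'' : Set V) (l m : HStar V) : ℤ :=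
  if h : IsRegularOn Φ'' l ∧ IsRegularOn Φ'' m ∧ ∃ w, w ∈ weyl Φ'' ∧ m = wAct w l
  then (-1) ^ len S h.2.2.choose else 0

/-- The Jantzen coefficient `c(λ, μ, Φ'', Φ') = Σ_{β ∈ Ψ⁺⁺(λ,Φ'',Φ')} sgn(s_β λ, μ)`. -/
def jc (S : RootSys V) (Φ'' Φ' : Set V) (l m : HStar V) : ℤ :=
  ∑ᶠ β ∈ PsiPP S Φ'' Φ' l, sgnW S Φ'' (sRefl β l) m

/-- The symmetrized Jantzen coefficient `c̃(λ, μ, Φ'', Φ')`. -/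
def jcSym (S : RootSys V) (Φ'' Φ' : Set V) (l m : HStar V) : ℤ :=
  jc S Φ'' Φ' l m + jc S Φ'' Φ' m l

/-- `θ(λ) = Σ_{w ∈ W_I} (-1)^{ℓ(w)} e^{wλ}` in the free `ℤ`-module on `h*`. -/
def theta (S : RootSys V) (I : Finset V) (l : HStar V) : HStar V →₀ ℤ :=
  ∑ᶠ w ∈ (weyl (PhiI S I) : Set (V ≃ₗ[ℝ] V)),
    Finsupp.single (wAct w l) ((-1) ^ len S w)

/-- `Φ_λ = {α ∈ Φ : ⟨λ, α⟩ = 0}`. -/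
def singSet (S : RootSys V) (l : HStar V) : Set V :=
  {α ∈ (S.Φ : Set V) | l α = 0}

/-- `Φ_{[λ]} = {α ∈ Φ : ⟨λ, α^∨⟩ ∈ ℤ}`. -/
def integralSet (S : RootSys V) (l : HStar V) : Set V :=
  {α ∈ (S.Φ : Set V) | IsInt (l (coroot α))}

/-- `(ℚ A) ∩ Φ`, the intersection of the rational span of `A` with `Φ`.
Taking `A = Φ_I ∪ {β}` gives `Φ_{β,1}`; taking `A = Φ_λ ∪ {β}` gives `Φ_{β,2}`. -/
def ratSpanRoots (S : RootSys V) (A : Set V) : Set V :=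
  {γ ∈ (S.Φ : Set V) | ∃ (t : Finset V) (c : V → ℚ),
    (t : Set V) ⊆ A ∧ γ = ∑ α ∈ t, (c α : ℝ) • α}

/-- `Φ_{β,0}`, the irreducible component of `Φ` containing `β`. -/
def component (S : RootSys V) (β : V) : Set V :=
  {γ ∈ (S.Φ : Set V) |
    Relation.ReflTransGen
      (fun x y => x ∈ (S.Φ : Set V) ∧ y ∈ (S.Φ : Set V) ∧ ⟪x, y⟫ ≠ 0) β γ}

/-- `λ|_{Φ'}`: the unique element of `ℂΦ'` with `⟨λ|_{Φ'}, α^∨⟩ = ⟨λ, α^∨⟩`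
for all `α ∈ Φ'`. -/
def restrictW (Φ' : Set V) (l : HStar V) : HStar V :=
  letI : Nonempty (HStar V) := ⟨0⟩
  Classical.epsilon fun m =>
    m ∈ Submodule.span ℂ (emb '' Φ') ∧ ∀ α ∈ Φ', m (coroot α) = l (coroot α)

/-- `ᴵWᴶ = {w ∈ W : ℓ(uwv) = ℓ(u) + ℓ(w) + ℓ(v) for all u ∈ W_I, v ∈ W_J}`. -/
def doubleCoset (S : RootSys V) (I J : Finset V) : Set (V ≃ₗ[ℝ] V) :=
  {w | w ∈ weyl (S.Φ : Set V) ∧ ∀ u ∈ weyl (PhiI S I), ∀ v ∈ weyl (PhiI S J),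
    len S (u * w * v) = len S u + len S w + len S v}

/-- The fundamental weight `ϖ_j` relative to an enumeration `e` of the simple roots:
the unique element of `h*` with `⟨ϖ_j, α_k^∨⟩ = δ_{jk}`. -/
def fundWeight {n : ℕ} (e : Fin n → V) (j : Fin n) : HStar V :=
  letI : Nonempty (HStar V) := ⟨0⟩
  Classical.epsilon fun m => ∀ k : Fin n, m (coroot (e k)) = if k = j then 1 else 0

/-- The labels of the irreducible Dynkin types. -/
inductive LieType | A | B | C | D | E | F | G
deriving DecidableEq

/-- The Cartan matrix of type `A_n` (1-based indices): entry `(i,j)` is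
`⟨α_i, α_j^∨⟩`. -/
def cartanA (i j : ℕ) : ℤ :=
  if i = j then 2 else if i + 1 = j ∨ j + 1 = i then -1 else 0

/-- The Cartan matrices of the irreducible types in the standard (Bourbaki/Humphreys)
numbering of the Dynkin diagram: `cartanEntry t n i j = ⟨α_i, α_j^∨⟩` (1-based). -/
def cartanEntry : LieType → ℕ → ℕ → ℕ → ℤ
  | .A, _, i, j => cartanA i j
  | .B, n, i, j => if i + 1 = n ∧ j = n then -2 else cartanA i j
  | .C, n, i, j => if i = n ∧ j + 1 = n then -2 else cartanA i j
  | .D, n, i, j =>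
      if i = j then 2
      else if (i + 2 = n ∧ j = n) ∨ (i = n ∧ j + 2 = n) then -1
      else if (i + 1 = n ∧ j = n) ∨ (i = n ∧ j + 1 = n) then 0
      else cartanA i j
  | .E, _, i, j =>
      if i = j then 2
      else if (i = 1 ∧ j = 3) ∨ (i = 3 ∧ j = 1) ∨ (i = 2 ∧ j = 4) ∨ (i = 4 ∧ j = 2) then -1
      else if (i = 1 ∧ j = 2) ∨ (i = 2 ∧ j = 1) ∨ (i = 2 ∧ j = 3) ∨ (i = 3 ∧ j = 2) then 0
      else cartanA i j
  | .F, _, i, j => if i = 2 ∧ j = 3 then -2 else cartanA i j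
  | .G, _, i, j => if i = 2 ∧ j = 1 then -3 else cartanA i j

/-- The standard basis vector `e_k` (1-based index, junk `0` outside `1 ≤ k ≤ n`). -/
def stdE (n k : ℕ) : EuclideanSpace ℝ (Fin n) :=
  if h : 1 ≤ k ∧ k ≤ n then EuclideanSpace.single ⟨k - 1, by omega⟩ 1 else 0

/-- The labels `B`, `C`, `D` of the classical non-`A` types. -/
inductive BCD | B | C | D
deriving DecidableEq

/-- The root set of `B_n` / `C_n` / `D_n` in the standard realization. -/
def bcdRoots (t : BCD) (n : ℕ) : Set (EuclideanSpace ℝ (Fin n)) :=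
  {v | (∃ i j : ℕ, 1 ≤ i ∧ i < j ∧ j ≤ n ∧
          (v = stdE n i - stdE n j ∨ v = -(stdE n i - stdE n j) ∨
           v = stdE n i + stdE n j ∨ v = -(stdE n i + stdE n j))) ∨
       (match t with
        | .B => ∃ i : ℕ, 1 ≤ i ∧ i ≤ n ∧ (v = stdE n i ∨ v = -stdE n i)
        | .C => ∃ i : ℕ, 1 ≤ i ∧ i ≤ n ∧ (v = (2:ℝ) • stdE n i ∨ v = -((2:ℝ) • stdE n i))
        | .D => False)}

/-- The positive roots of `B_n` / `C_n` / `D_n` in the standard realization. -/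
def bcdPos (t : BCD) (n : ℕ) : Set (EuclideanSpace ℝ (Fin n)) :=
  {v | (∃ i j : ℕ, 1 ≤ i ∧ i < j ∧ j ≤ n ∧
          (v = stdE n i - stdE n j ∨ v = stdE n i + stdE n j)) ∨
       (match t with
        | .B => ∃ i : ℕ, 1 ≤ i ∧ i ≤ n ∧ v = stdE n i
        | .C => ∃ i : ℕ, 1 ≤ i ∧ i ≤ n ∧ v = (2:ℝ) • stdE n i
        | .D => False)}

/-- The simple roots of `B_n` / `C_n` / `D_n` in the standard realization. -/
def bcdSimple (t : BCD) (n : ℕ) : Set (EuclideanSpace ℝ (Fin n)) :=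
  {v | (∃ i : ℕ, 1 ≤ i ∧ i < n ∧ v = stdE n i - stdE n (i + 1)) ∨
       (match t with
        | .B => v = stdE n n
        | .C => v = (2:ℝ) • stdE n n
        | .D => v = stdE n (n - 1) + stdE n n)}

/-- The simple root `α_k` of `B_n` / `C_n` / `D_n` (1-based index `k`). -/
def bcdAlpha (t : BCD) (n k : ℕ) : EuclideanSpace ℝ (Fin n) :=
  if k < n then stdE n k - stdE n (k + 1)
  else match t with
  | .B => stdE n n
  | .C => (2:ℝ) • stdE n n
  | .D => stdE n (n - 1) + stdE n n

/-!
The product of the values of a weight on the positive roots of `Φ_I` transforms under `W_I` by the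
sign character, so `c(λ, μ)` vanishes if and only if `∑ 1 / ∏ ⟨s_β λ, α⟩` does, the sum running over
the roots `β ∈ Ψ_λ⁺⁺` with `s_β λ ∈ W_I μ`.

The system `Φ_I` is a product of systems of type `A`, one for each block of coordinates between two
consecutive cuts, and of a system of the type of `Φ` in the coordinates beyond the last cut, the
tail. Hence the set of coordinates in a block is an invariant of `W_I`, and so is the set of
coordinates up to sign in the tail. Comparing these invariants shows that two different roots `β`
occur for the same `μ` only if, up to `W_I`, both negate one coordinate `λ_i` outside the tail. The
candidates are the root `e_i` (in types `B` and `C`), the root `e_i + e_j` with `λ_j = 0` in the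
block of `i`, and a root `e_i ± e_k` with `λ_k = ± λ_i` in the tail. In types `B` and `C` the last
two both have the sign opposite to that of `e_i`, so the sum vanishes exactly if one of them is
present and the other is not. In type `D` the last two must both be present, and `e_i ± e_k`
additionally changes a sign in the tail, which is achieved by `W_I` only if the tail has a zero.
-/

section DualAction

variable {E : Type*} [NormedAddCommGroup E] [InnerProductSpace ℝ E]

lemma wAct_mul (u v : E ≃ₗ[ℝ] E) (l : HStar E) : wAct (u * v) l = wAct u (wAct v l) := rfl

lemma wAct_one (l : HStar E) : wAct 1 l = l := rfl

lemma sRefl_apply (β v : E) (l : HStar E) :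
    sRefl β l v = l v - l (coroot β) * ((⟪β, v⟫ : ℝ) : ℂ) := rfl

end DualAction

section Reflections

lemma reflV_apply (α v : V) : reflV α v = v - (⟪v, coroot α⟫ : ℝ) • α := by
  by_cases h : (⟪α, α⟫ : ℝ) = 0
  · simp [reflV, inner_self_eq_zero.1 h]
  · simp only [reflV, h, dite_false, Module.reflection_apply]
    rfl

lemma reflV_self (α : V) : reflV α α = -α := by
  by_cases h : (⟪α, α⟫ : ℝ) = 0
  · simp [inner_self_eq_zero.1 h]
  · have hα : (⟪α, coroot α⟫ : ℝ) = 2 := corootForm_self h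
    rw [reflV_apply, hα, two_smul]
    abel

lemma reflV_reflV (α v : V) : reflV α (reflV α v) = v := by
  have h := congrArg (reflV α) (reflV_apply α v)
  rw [map_sub, map_smul, reflV_self, reflV_apply α v] at h
  rw [reflV_apply α v, h]
  module

lemma reflV_symm (α : V) : (reflV α).symm = reflV α :=
  LinearEquiv.ext fun v => (LinearEquiv.symm_apply_eq _).2 (reflV_reflV α v).symm

lemma reflV_inv (α : V) : (reflV α)⁻¹ = reflV α := reflV_symm α

lemma reflV_neg (α : V) : reflV (-α) = reflV α := by
  ext v
  simp [reflV_apply, coroot]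

lemma wAct_reflV (α : V) (l : HStar V) : wAct (reflV α) l = sRefl α l := by
  ext v
  simp only [wAct, LinearMap.comp_apply, LinearEquiv.coe_coe, reflV_symm, reflV_apply, sRefl_apply,
    map_sub, map_smul, coroot, real_inner_smul_right, real_inner_comm v α, Complex.real_smul]
  push_cast
  ring

lemma reflV_mem_weyl {R : Set V} {α : V} (hα : α ∈ R) : reflV α ∈ weyl R :=
  Subgroup.subset_closure ⟨α, hα, rfl⟩

lemma weyl_induction {R : Set V} {p : (w : V ≃ₗ[ℝ] V) → w ∈ weyl R → Prop}
    (one : p 1 (one_mem _))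
    (reflV_mul : ∀ α (hα : α ∈ R) w (hw : w ∈ weyl R), p w hw →
      p (reflV α * w) (mul_mem (reflV_mem_weyl hα) hw))
    {w : V ≃ₗ[ℝ] V} (hw : w ∈ weyl R) : p w hw := by
  induction hw using Subgroup.closure_induction_left with
  | one => exact one
  | mul_left x hx w hw ih =>
    obtain ⟨α, hα, rfl⟩ := hx
    exact reflV_mul α hα w hw ih
  | inv_mul_cancel x hx w hw ih =>
    obtain ⟨α, hα, rfl⟩ := hx
    simp only [reflV_inv]
    exact reflV_mul α hα w hw ih

lemma weyl_apply_mem {R A : Set V} (hRA : ∀ α ∈ R, ∀ β ∈ A, reflV α β ∈ A) {w : V ≃ₗ[ℝ] V}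
    (hw : w ∈ weyl R) : ∀ β ∈ A, w β ∈ A := by
  induction hw using weyl_induction with
  | one => exact fun β hβ => hβ
  | reflV_mul α hα w _ ih => exact fun β hβ => hRA α hα _ (ih β hβ)

end Reflections

section Inversions

variable {E : Type*} [AddCommGroup E] [Module ℝ E] {T : Finset E}

/-- The inversion set of `u` relative to a finite set `T` of vectors that plays the role of a
system of positive roots. -/
def inversions (T : Finset E) (u : E ≃ₗ[ℝ] E) : Finset E := {β ∈ T | u β ∉ T}

-- Replacing `u β` by whichever of `± u β` lies in `T` permutes `T`.
lemma prod_apply_of_odd (hT : ∀ β ∈ T, -β ∉ T) {u : E ≃ₗ[ℝ] E}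
    (hu : ∀ β ∈ T, u β ∈ T ∨ -u β ∈ T) {F : E → ℂ} (hF : ∀ v ∈ T, F (-v) = -F v) :
    ∏ β ∈ T, F (u β) = (-1) ^ (inversions T u).card * ∏ β ∈ T, F β := by
  let r : E → E := fun β => if u β ∈ T then u β else -u β
  have r_mem : ∀ β ∈ T, r β ∈ T := fun β hβ => by
    by_cases h : u β ∈ T
    · simp [r, h]
    · simpa [r, h] using (hu β hβ).resolve_left h
  have ne_neg : ∀ a ∈ T, ∀ b ∈ T, u a ≠ -u b := fun a ha b hb h => by
    rw [← map_neg] at h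
    exact hT b hb (u.injective h ▸ ha)
  have r_injOn : Set.InjOn r T := fun a ha b hb hab => by
    simp only [r] at hab
    split_ifs at hab
    · exact u.injective hab
    · exact (ne_neg a ha b hb hab).elim
    · exact (ne_neg b hb a ha hab.symm).elim
    · exact u.injective (neg_injective hab)
  have apply_eq : ∀ β ∈ T, F (u β) = (if u β ∉ T then (-1 : ℂ) else 1) * F (r β) := fun β hβ => by
    by_cases h : u β ∈ T
    · simp [r, h]
    · simp [r, h, hF _ ((hu β hβ).resolve_left h) ▸ congrArg F (neg_neg (u β)).symm]
  rw [Finset.prod_congr rfl apply_eq, Finset.prod_mul_distrib, Finset.prod_ite, inversions]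
  congr 1
  · simp
  · exact Finset.prod_nbij r r_mem r_injOn
      (Finset.surjOn_of_injOn_of_card_le r r_mem r_injOn le_rfl) fun _ _ => rfl

-- `β ↦ -s_α β` is an involution of the inversion set whose only fixed point is `α`.
lemma odd_card_inversions_reflV {T : Finset V} (hT : ∀ β ∈ T, -β ∉ T) {α : V} (hα : α ∈ T)
    (hred : ∀ β ∈ T, ∀ c : ℝ, β = c • α → β = α)
    (hu : ∀ β ∈ T, reflV α β ∈ T ∨ -reflV α β ∈ T) :
    Odd (inversions T (reflV α)).card := by
  have mem_inv : ∀ β, β ∈ inversions T (reflV α) ↔ β ∈ T ∧ reflV α β ∉ T :=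
    fun β => Finset.mem_filter
  have hαN : α ∈ inversions T (reflV α) := (mem_inv α).2 ⟨hα, by simpa [reflV_self] using hT α hα⟩
  have even_erase : (((inversions T (reflV α)).erase α).card : ZMod 2) = 0 := by
    rw [Finset.card_eq_sum_ones, Nat.cast_sum]
    refine Finset.sum_involution (fun β _ => -reflV α β) (fun _ _ => by decide) ?_ ?_ ?_
    · intro β hβ _ hfix
      rw [Finset.mem_erase, mem_inv] at hβ
      refine hβ.1 (hred β hβ.2.1 ((1 / 2) * ⟪β, coroot α⟫) ?_)
      rw [reflV_apply, neg_sub, sub_eq_iff_eq_add] at hfix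
      rw [mul_smul, hfix, ← two_smul ℝ β, smul_smul]
      norm_num
    · intro β hβ
      rw [Finset.mem_erase, mem_inv] at hβ ⊢
      refine ⟨fun h => hβ.1 ?_, (hu β hβ.2.1).resolve_left hβ.2.2, ?_⟩
      · rw [neg_eq_iff_eq_neg, ← reflV_self] at h
        exact (reflV α).injective h
      · rw [map_neg, reflV_reflV]
        exact hT β hβ.2.1
    · intro β _
      rw [map_neg, reflV_reflV, neg_neg]
  rw [ZMod.natCast_eq_zero_iff_even] at even_erase
  rw [← Finset.card_erase_add_one hαN]
  exact even_erase.add_one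

end Inversions

section SignCharacter

variable {S : RootSys V} {R : Set V}

lemma RootSys.neg_mem {α : V} (hα : α ∈ S.Φ) : -α ∈ S.Φ := by
  simpa [reflV_self] using S.refl_mem α hα α hα

lemma IsSubsystem.neg_mem (hR : IsSubsystem S R) {α : V} (hα : α ∈ R) : -α ∈ R := by
  simpa [reflV_self] using hR.2 α hα α hα

lemma RootSys.eq_of_smul {α β : V} (hα : α ∈ S.pos) (hβ : β ∈ S.pos) {c : ℝ} (h : β = c • α) :
    β = α := by
  rcases S.reduced α (S.pos_subset hα) c (h ▸ S.pos_subset hβ) with rfl | rfl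
  · simpa using h
  · exact (S.not_both α hα (by simpa [h] using hβ)).elim

lemma len_eq_card_inversions (w : V ≃ₗ[ℝ] V) : len S w = (inversions S.pos w).card := by
  rw [len, ← Set.ncard_coe_finset]
  simp [inversions]

lemma neg_one_pow_len_reflV {α : V} (hα : α ∈ S.Φ) : (-1 : ℂ) ^ len S (reflV α) = -1 := by
  wlog hpos : α ∈ S.pos generalizing α
  · simpa [reflV_neg] using this (RootSys.neg_mem hα) ((S.mem_pos_or α hα).resolve_left hpos)
  rw [len_eq_card_inversions]
  exact (odd_card_inversions_reflV S.not_both hpos (fun β hβ _ => S.eq_of_smul hpos hβ)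
    fun β hβ => S.mem_pos_or _ (S.refl_mem α hα β (S.pos_subset hβ))).neg_one_pow

lemma prod_sign_apply (w : V ≃ₗ[ℝ] V) :
    ∏ β ∈ S.pos, (if w β ∈ S.pos then (1 : ℂ) else -1) = (-1) ^ len S w := by
  rw [len_eq_card_inversions, inversions, Finset.prod_ite]
  simp

lemma neg_one_pow_len_mul {u w : V ≃ₗ[ℝ] V} (hu : ∀ β ∈ S.Φ, u β ∈ S.Φ)
    (hw : ∀ β ∈ S.Φ, w β ∈ S.Φ) :
    (-1 : ℂ) ^ len S (u * w) = (-1) ^ len S w * (-1) ^ len S u := by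
  have odd_sign : ∀ v ∈ S.pos, (if u (-v) ∈ S.pos then (1 : ℂ) else -1) =
      -(if u v ∈ S.pos then (1 : ℂ) else -1) := fun v hv => by
    rw [map_neg]
    rcases S.mem_pos_or _ (hu v (S.pos_subset hv)) with h | h
    · simp [h, S.not_both _ h]
    · have h' := S.not_both _ h
      rw [neg_neg] at h'
      simp [h, h']
  have h := prod_apply_of_odd S.not_both (fun β hβ => S.mem_pos_or _ (hw β (S.pos_subset hβ)))
    (F := fun v => if u v ∈ S.pos then 1 else -1) odd_sign
  rw [prod_sign_apply, ← len_eq_card_inversions] at h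
  rw [← h, ← prod_sign_apply]
  rfl

/-- The product of the values of `l` on the positive roots of `R`, which is, up to a constant, the
numerator of Weyl's dimension formula; it transforms by the sign character of `weyl R`. -/
def weylNumerator (S : RootSys V) (R : Set V) (l : HStar V) : ℂ := ∏ β ∈ S.pos with β ∈ R, l β

lemma weylNumerator_sRefl (hR : IsSubsystem S R) {α : V} (hα : α ∈ R) (l : HStar V) :
    weylNumerator S R (sRefl α l) = -weylNumerator S R l := by
  wlog hpos : α ∈ S.pos generalizing α
  · rw [← wAct_reflV, ← reflV_neg, wAct_reflV]
    exact this (hR.neg_mem hα) ((S.mem_pos_or α (hR.1 hα)).resolve_left hpos)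
  set T : Finset V := {β ∈ S.pos | β ∈ R} with hTdef
  have mem_T : ∀ β, β ∈ T ↔ β ∈ S.pos ∧ β ∈ R := fun β => Finset.mem_filter
  have hT : ∀ β ∈ T, -β ∉ T := fun β hβ h =>
    S.not_both β ((mem_T _).1 hβ).1 ((mem_T _).1 h).1
  have hu : ∀ β ∈ T, reflV α β ∈ T ∨ -reflV α β ∈ T := fun β hβ => by
    have h := hR.2 α hα β ((mem_T β).1 hβ).2
    exact (S.mem_pos_or _ (hR.1 h)).imp (fun hp => (mem_T _).2 ⟨hp, h⟩)
      fun hp => (mem_T _).2 ⟨hp, hR.neg_mem h⟩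
  have h := prod_apply_of_odd hT hu (F := l) fun v _ => map_neg l v
  rw [(odd_card_inversions_reflV hT ((mem_T α).2 ⟨hpos, hα⟩)
    (fun β hβ _ => S.eq_of_smul hpos ((mem_T β).1 hβ).1) hu).neg_one_pow, neg_one_mul] at h
  rw [← wAct_reflV, weylNumerator, weylNumerator, ← hTdef, ← h]
  simp [wAct, reflV_symm]

lemma weylNumerator_wAct (hR : IsSubsystem S R) {w : V ≃ₗ[ℝ] V} (hw : w ∈ weyl R) (l : HStar V) :
    weylNumerator S R (wAct w l) = (-1) ^ len S w * weylNumerator S R l := by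
  have maps_Φ : ∀ α ∈ R, ∀ β ∈ S.Φ, reflV α β ∈ S.Φ := fun α hα => S.refl_mem α (hR.1 hα)
  induction hw using weyl_induction with
  | one =>
    rw [wAct_one, ← prod_sign_apply, Finset.prod_eq_one fun β hβ => if_pos (by exact hβ), one_mul]
  | reflV_mul α hα w hw ih =>
    rw [wAct_mul, wAct_reflV, weylNumerator_sRefl hR hα, ih,
      neg_one_pow_len_mul (maps_Φ α hα) (weyl_apply_mem (A := (S.Φ : Set V)) maps_Φ hw),
      neg_one_pow_len_reflV (hR.1 hα)]
    ring

lemma weylNumerator_ne_zero {l : HStar V} (hl : IsRegularOn R l) : weylNumerator S R l ≠ 0 :=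
  Finset.prod_ne_zero_iff.2 fun β hβ => hl β (Finset.mem_filter.1 hβ).2

lemma IsRegularOn.wAct (hR : IsSubsystem S R) {w : V ≃ₗ[ℝ] V} (hw : w ∈ weyl R) {l : HStar V}
    (hl : IsRegularOn R l) : IsRegularOn R (wAct w l) :=
  fun α hα => hl _ (weyl_apply_mem hR.2 (inv_mem hw) α hα)

lemma sgnW_mul_weylNumerator (hR : IsSubsystem S R) {l m : HStar V} (hl : IsRegularOn R l)
    (hlm : ∃ w ∈ weyl R, m = wAct w l) :
    (sgnW S R l m : ℂ) * weylNumerator S R l = weylNumerator S R m := by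
  obtain ⟨w, hw, hm⟩ := hlm
  have h : IsRegularOn R l ∧ IsRegularOn R m ∧ ∃ w, w ∈ weyl R ∧ m = wAct w l :=
    ⟨hl, hm ▸ hl.wAct hR hw, w, hw, hm⟩
  have hspec := h.2.2.choose_spec
  have hnum := weylNumerator_wAct hR hspec.1 l
  rw [← hspec.2] at hnum
  rw [sgnW, dif_pos h, hnum]
  push_cast
  rfl

end SignCharacter

section LinkedRoots

variable {S : RootSys V} {R Φ' : Set V} {l m : HStar V}

/-- The roots `β ∈ Ψ⁺⁺` with `m ∈ W(R) s_β l`: exactly those that contribute to `jc S R Φ' l m`. -/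
def linkedRoots (S : RootSys V) (R Φ' : Set V) (l m : HStar V) : Finset V :=
  {β ∈ S.pos | β ∈ PsiPP S R Φ' l ∧ ∃ w ∈ weyl R, m = wAct w (sRefl β l)}

lemma mem_linkedRoots {β : V} : β ∈ linkedRoots S R Φ' l m ↔
    β ∈ PsiPP S R Φ' l ∧ ∃ w ∈ weyl R, m = wAct w (sRefl β l) :=
  Finset.mem_filter.trans (and_iff_right_of_imp fun h => h.1.1.1.2)

lemma isRegularOn_of_mem_linkedRoots {β : V} (hβ : β ∈ linkedRoots S R Φ' l m) :
    IsRegularOn R (sRefl β l) :=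
  (mem_linkedRoots.1 hβ).1.2

lemma jc_eq_sum_linkedRoots : jc S R Φ' l m = ∑ β ∈ linkedRoots S R Φ' l m,
    sgnW S R (sRefl β l) m := by
  refine finsum_mem_eq_sum_of_inter_support_eq _ (Set.ext fun β => ?_)
  simp only [Set.mem_inter_iff, Function.mem_support, Finset.mem_coe, mem_linkedRoots]
  refine ⟨fun ⟨hβ, hne⟩ => ⟨⟨hβ, ?_⟩, hne⟩, fun ⟨hβ, hne⟩ => ⟨hβ.1, hne⟩⟩
  by_contra hlink
  exact hne (dif_neg fun h => hlink h.2.2)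

lemma jc_eq_zero_iff_sum_inv (hR : IsSubsystem S R) : jc S R Φ' l m = 0 ↔
    ∑ β ∈ linkedRoots S R Φ' l m, (weylNumerator S R (sRefl β l))⁻¹ = 0 := by
  have sgn_eq : ∀ β ∈ linkedRoots S R Φ' l m, (sgnW S R (sRefl β l) m : ℂ) =
      weylNumerator S R m * (weylNumerator S R (sRefl β l))⁻¹ := fun β hβ =>
    (eq_mul_inv_iff_mul_eq₀ (weylNumerator_ne_zero (isRegularOn_of_mem_linkedRoots hβ))).2
      (sgnW_mul_weylNumerator hR (isRegularOn_of_mem_linkedRoots hβ) (mem_linkedRoots.1 hβ).2)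
  rw [← Int.cast_eq_zero (α := ℂ), jc_eq_sum_linkedRoots, Int.cast_sum,
    Finset.sum_congr rfl sgn_eq, ← Finset.mul_sum, mul_eq_zero, or_iff_right_of_imp]
  refine fun hm => Finset.sum_eq_zero fun β hβ => ?_
  obtain ⟨w, hw, rfl⟩ := (mem_linkedRoots.1 hβ).2
  exact (weylNumerator_ne_zero ((isRegularOn_of_mem_linkedRoots hβ).wAct hR hw) hm).elim

lemma mem_linkedRoots_of_wAct (hR : IsSubsystem S R) {a b : V} (ha : a ∈ linkedRoots S R Φ' l m)
    (hb : b ∈ PsiP S R Φ' l) {u : V ≃ₗ[ℝ] V} (hu : u ∈ weyl R)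
    (h : sRefl b l = wAct u (sRefl a l)) : b ∈ linkedRoots S R Φ' l m := by
  obtain ⟨_, w, hw, hm⟩ := mem_linkedRoots.1 ha
  refine mem_linkedRoots.2 ⟨⟨hb, ?_⟩, w * u⁻¹, mul_mem hw (inv_mem hu), ?_⟩
  · rw [h]
    exact (isRegularOn_of_mem_linkedRoots ha).wAct hR hu
  · rw [h, ← wAct_mul, inv_mul_cancel_right, hm]

lemma exists_wAct_of_mem_linkedRoots {a b : V} (ha : a ∈ linkedRoots S R Φ' l m)
    (hb : b ∈ linkedRoots S R Φ' l m) : ∃ u ∈ weyl R, sRefl b l = wAct u (sRefl a l) := by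
  obtain ⟨_, w, hw, rfl⟩ := mem_linkedRoots.1 ha
  obtain ⟨_, w', hw', h⟩ := mem_linkedRoots.1 hb
  refine ⟨w'⁻¹ * w, mul_mem (inv_mem hw') hw, ?_⟩
  rw [wAct_mul, h, ← wAct_mul, inv_mul_cancel, wAct_one]

end LinkedRoots

section ParabolicSubsystem

variable {S : RootSys V} {I : Finset V}

lemma isSubsystem_PhiI : IsSubsystem S (PhiI S I) := by
  refine ⟨fun α hα => hα.1, fun α hα β hβ => ⟨S.refl_mem α hα.1 β hβ.1, ?_⟩⟩
  obtain ⟨k, hk⟩ := S.crystallographic α hα.1 β hβ.1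
  rw [reflV_apply, hk, Int.cast_smul_eq_zsmul]
  exact Submodule.sub_mem _ hβ.2 (Submodule.smul_mem _ _ hα.2)

end ParabolicSubsystem

section Blocks

variable {n : ℕ} {J : Finset (Fin n)} {i j k : Fin n}

/-- Cutting `Fin n` after each element of `J` splits it into blocks; `SameBlock J i j` says that
`i` and `j` lie in the same one. When `J` indexes the simple roots outside `I`, these are the
intervals `q_{s-1} < i ≤ q_s`. -/
def SameBlock (J : Finset (Fin n)) (i j : Fin n) : Prop := ∀ c ∈ J, c < i ↔ c < j

/-- `k` lies in the part of `Fin n` beyond the last cut, i.e. `q_{m-1} < k`. -/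
def InTail (J : Finset (Fin n)) (k : Fin n) : Prop := ∀ c ∈ J, c < k

lemma SameBlock.refl (i : Fin n) : SameBlock J i i := fun _ _ => Iff.rfl

lemma SameBlock.symm (h : SameBlock J i j) : SameBlock J j i := fun c hc => (h c hc).symm

lemma SameBlock.trans (h : SameBlock J i j) (h' : SameBlock J j k) : SameBlock J i k :=
  fun c hc => (h c hc).trans (h' c hc)

lemma SameBlock.inTail_iff (h : SameBlock J i j) : InTail J i ↔ InTail J j :=
  forall₂_congr h

lemma InTail.sameBlock (hi : InTail J i) (hj : InTail J j) : SameBlock J i j :=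
  fun c hc => iff_of_true (hi c hc) (hj c hc)

lemma InTail.mono (hi : InTail J i) (hij : i ≤ j) : InTail J j :=
  fun c hc => (hi c hc).trans_le hij

lemma InTail.lt_of_not (hk : InTail J k) (hi : ¬ InTail J i) : i < k :=
  not_le.1 fun hki => hi (hk.mono hki)

lemma InTail.notMem (hi : InTail J i) (hij : i ≤ j) : j ∉ J :=
  fun hj => (hi j hj).not_ge hij

end Blocks

section SimpleRoots

variable {E : Type*} [AddCommGroup E] [Module ℝ E] {n : ℕ} {t : BCD} {c : ℝ} {f : Fin n → E}
  {J : Finset (Fin n)} {i j k : Fin n}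

/-- The factor by which the roots `e_i` of `B_n` have to be scaled in type `t` (irrelevant in
type `D`). -/
def scale : BCD → ℝ
  | .B => 1
  | .C => 2
  | .D => 1

lemma scale_eq (t : BCD) : scale t = 1 ∨ scale t = 2 := by
  cases t <;> simp [scale]

lemma scale_ne_zero (t : BCD) : scale t ≠ 0 := by
  cases t <;> simp [scale]

lemma two_div_scale_eq (t : BCD) : 2 / scale t = 1 ∨ 2 / scale t = 2 := by
  cases t <;> simp [scale]

/-- The `k`-th simple root (counted from `0`) of type `t` relative to the orthonormal system `f`,
where the last simple root is `c • f (n - 1)` in types `B` and `C`: `c = scale t` gives the simple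
roots, `c = 2 / scale t` the simple coroots. -/
def simpleRoot (t : BCD) (c : ℝ) (f : Fin n → E) (k : Fin n) : E :=
  if h : k.1 + 1 < n then f k - f ⟨k + 1, h⟩
  else if t = .D then f ⟨k - 1, by omega⟩ + f k
  else c • f k

lemma simpleRoot_of_lt (h : k.1 + 1 < n) : simpleRoot t c f k = f k - f ⟨k + 1, h⟩ := dif_pos h

lemma simpleRoot_last (h : k.1 + 1 = n) :
    simpleRoot t c f k = if t = .D then f ⟨k - 1, by omega⟩ + f k else c • f k :=
  dif_neg (by omega)

variable {P : AddSubsemigroup E}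

lemma sub_mem_of_sameBlock (hP : ∀ k ∉ J, simpleRoot t c f k ∈ P) (hij : i < j)
    (h : SameBlock J i j) : f i - f j ∈ P := by
  obtain ⟨i, hi⟩ := i
  obtain ⟨j, hj⟩ := j
  induction j, (Nat.succ_le_of_lt hij : i + 1 ≤ j) using Nat.le_induction with
  | base =>
    have hiJ : (⟨i, hi⟩ : Fin n) ∉ J := fun hiJ => ((h _ hiJ).2 hij).false
    simpa [simpleRoot_of_lt (k := ⟨i, hi⟩) hj] using hP _ hiJ
  | succ j hij' ih =>
    have between : SameBlock J ⟨i, hi⟩ ⟨j, by omega⟩ := fun c hc => by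
      have := h c hc
      simp only [Fin.lt_def] at this ⊢
      omega
    have hjJ : (⟨j, by omega⟩ : Fin n) ∉ J := fun hjJ => by
      have := h _ hjJ
      simp only [Fin.lt_def] at this
      omega
    have hstep := hP _ hjJ
    rw [simpleRoot_of_lt hj] at hstep
    rw [← sub_add_sub_cancel _ (f ⟨j, by omega⟩)]
    exact P.add_mem (ih (by omega) (Fin.mk_lt_mk.2 hij') between) hstep

lemma add_mem_of_sameBlock (hP : ∀ k ∉ J, simpleRoot t c f k ∈ P) {x : E} (hij : i ≤ j)
    (h : SameBlock J i j) (hj : f j + x ∈ P) : f i + x ∈ P := by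
  rcases hij.eq_or_lt with rfl | hij
  · exact hj
  · rw [← sub_add_cancel (f i) (f j), add_assoc]
    exact P.add_mem (sub_mem_of_sameBlock hP hij h) hj

lemma two_smul_last_mem (hP : ∀ k ∉ J, simpleRoot t c f k ∈ P) (hc : c = 1 ∨ c = 2) (ht : t ≠ .D)
    (hk : k.1 + 1 = n) (hkJ : k ∉ J) : f k + f k ∈ P := by
  have h := hP k hkJ
  rw [simpleRoot_last hk, if_neg ht] at h
  rcases hc with rfl | rfl
  · rw [one_smul] at h
    exact P.add_mem h h
  · rwa [two_smul] at h

lemma add_mem_of_inTail (hP : ∀ k ∉ J, simpleRoot t c f k ∈ P) (hc : c = 1 ∨ c = 2) (hij : i < j)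
    (hi : InTail J i) : f i + f j ∈ P := by
  let last : Fin n := ⟨n - 1, Nat.sub_one_lt_of_lt i.isLt⟩
  have last_add_one : last.1 + 1 = n := Nat.sub_add_cancel i.pos
  have j_le : j ≤ last := Fin.le_def.2 (show _ ≤ n - 1 by omega)
  have last_mem : InTail J last := hi.mono (hij.le.trans j_le)
  have i_add_last : f i + f last ∈ P := by
    by_cases ht : t = .D
    · have i_le : i ≤ ⟨last - 1, by omega⟩ := by
        rw [Fin.lt_def] at hij
        exact Fin.le_def.2 (show i.1 ≤ n - 1 - 1 by omega)
      have h := hP last (last_mem.notMem le_rfl)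
      rw [simpleRoot_last last_add_one, if_pos ht] at h
      exact add_mem_of_sameBlock hP i_le (hi.sameBlock (hi.mono i_le)) h
    · exact add_mem_of_sameBlock hP (hij.le.trans j_le) (hi.sameBlock last_mem)
        (two_smul_last_mem hP hc ht last_add_one (last_mem.notMem le_rfl))
  rw [add_comm] at i_add_last ⊢
  exact add_mem_of_sameBlock hP j_le ((hi.mono hij.le).sameBlock last_mem) i_add_last

lemma smul_mem_of_inTail (hP : ∀ k ∉ J, simpleRoot t c f k ∈ P) (hc : c = 1 ∨ c = 2) (ht : t ≠ .D)
    (hi : InTail J i) : c • f i ∈ P := by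
  let last : Fin n := ⟨n - 1, Nat.sub_one_lt_of_lt i.isLt⟩
  have last_add_one : last.1 + 1 = n := Nat.sub_add_cancel i.pos
  have i_le : i ≤ last := Fin.le_def.2 (show _ ≤ n - 1 by omega)
  have h := hP last (hi.notMem i_le)
  rw [simpleRoot_last last_add_one, if_neg ht] at h
  rcases i_le.eq_or_lt with hil | hil
  · rwa [hil]
  · have hsub := sub_mem_of_sameBlock hP hil (hi.sameBlock (hi.mono i_le))
    rw [← sub_add_cancel (f i) (f last), smul_add]
    refine P.add_mem ?_ h
    rcases hc with rfl | rfl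
    · rwa [one_smul]
    · rw [two_smul]
      exact P.add_mem hsub hsub

end SimpleRoots

section Coordinates

variable {E : Type*} [NormedAddCommGroup E] [InnerProductSpace ℝ E] {n : ℕ}
  {f : OrthonormalBasis (Fin n) ℝ E} {i j k : Fin n} {ε : ℤˣ} {l : HStar E}

lemma smul_ne_add_smul (hij : i ≠ j) (c : ℝ) : c • f i ≠ f i + ε • f j := fun h => by
  have := congrArg (inner ℝ (f j)) h
  rcases Int.units_eq_one_or ε with rfl | rfl <;>
    simp [inner_add_right, inner_smul_right, hij.symm] at this

lemma add_ne_add_smul (hjk : j ≠ k) : f i + f j ≠ f i + ε • f k := fun h => by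
  have := congrArg (inner ℝ (f j)) (add_left_cancel h)
  rcases Int.units_eq_one_or ε with rfl | rfl <;> simp [hjk] at this

lemma ext_basis {l l' : HStar E} (f : OrthonormalBasis (Fin n) ℝ E)
    (h : ∀ k, l (f k) = l' (f k)) : l = l' :=
  f.toBasis.ext fun k => by simpa using h k

lemma coroot_add_smul (hij : i ≠ j) (ε : ℤˣ) : coroot (f i + ε • f j) = f i + ε • f j := by
  have norm_sq : (⟪f i + ε • f j, f i + ε • f j⟫ : ℝ) = 2 := by
    rcases Int.units_eq_one_or ε with rfl | rfl <;>
      simp only [one_smul, Units.neg_smul, inner_add_left, inner_add_right, inner_neg_left,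
        inner_neg_right, OrthonormalBasis.inner_eq_ite, hij, hij.symm, if_true, if_false] <;>
      norm_num
  rw [coroot, norm_sq, div_self two_ne_zero, one_smul]

lemma coroot_smul_basis {c : ℝ} (hc : c ≠ 0) (i : Fin n) : coroot (c • f i) = (2 / c) • f i := by
  rw [coroot, real_inner_smul_left, real_inner_smul_right, OrthonormalBasis.inner_eq_ite,
    if_pos rfl, smul_smul]
  congr 1
  field_simp

lemma map_units_smul (l : HStar E) (ε : ℤˣ) (v : E) : l (ε • v) = ε • l v := by
  rcases Int.units_eq_one_or ε with rfl | rfl <;> simp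

lemma sRefl_add_smul_apply (hij : i ≠ j) (ε : ℤˣ) (l : HStar E) (k : Fin n) :
    sRefl (f i + ε • f j) l (f k) =
      if k = i then -(ε • l (f j)) else if k = j then -(ε • l (f i)) else l (f k) := by
  rw [sRefl_apply, coroot_add_smul hij, map_add, map_units_smul]
  rcases Int.units_eq_one_or ε with rfl | rfl <;>
  · simp only [one_smul, Units.neg_smul, inner_add_left, inner_neg_left,
      OrthonormalBasis.inner_eq_ite, @eq_comm _ k]
    by_cases hik : i = k
    · simp [← hik, hij.symm]
    · by_cases hjk : j = k <;> simp [hik, hjk]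

lemma sRefl_smul_apply {c : ℝ} (hc : c ≠ 0) (i : Fin n) (l : HStar E) (k : Fin n) :
    sRefl (c • f i) l (f k) = if k = i then -l (f i) else l (f k) := by
  have hc' : (c : ℂ) ≠ 0 := by exact_mod_cast hc
  rw [sRefl_apply, coroot_smul_basis hc, map_smul, real_inner_smul_left,
    OrthonormalBasis.inner_eq_ite]
  rcases eq_or_ne k i with rfl | hki
  · simp only [Complex.real_smul, if_true]
    push_cast
    field_simp
    ring
  · simp [hki, hki.symm]

lemma sRefl_add_apply (hij : i ≠ j) (l : HStar E) (k : Fin n) :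
    sRefl (f i + f j) l (f k) =
      if k = i then -l (f j) else if k = j then -l (f i) else l (f k) := by
  simpa using sRefl_add_smul_apply hij 1 l k

lemma sRefl_sub_apply (hij : i ≠ j) (l : HStar E) (k : Fin n) :
    sRefl (f i - f j) l (f k) =
      if k = i then l (f j) else if k = j then l (f i) else l (f k) := by
  simpa [sub_eq_add_neg] using sRefl_add_smul_apply hij (-1) l k

lemma sRefl_basis_apply (i : Fin n) (l : HStar E) (k : Fin n) :
    sRefl (f i) l (f k) = if k = i then -l (f i) else l (f k) := by
  simpa using sRefl_smul_apply one_ne_zero i l k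

lemma sRefl_smul_basis {c : ℝ} (hc : c ≠ 0) (i : Fin n) (l : HStar E) :
    sRefl (c • f i) l = sRefl (f i) l :=
  ext_basis f fun k => by rw [sRefl_smul_apply hc, sRefl_basis_apply]

lemma sRefl_add_of_eq_zero (hij : i ≠ j) (hj : l (f j) = 0) :
    sRefl (f i + f j) l = sRefl (f i - f j) (sRefl (f i) l) :=
  ext_basis f fun k => by
    simp only [sRefl_add_apply hij, sRefl_sub_apply hij, sRefl_basis_apply]
    split_ifs <;> simp_all

lemma sRefl_add_smul_of_eq (hij : i ≠ j) (h : ε • l (f j) = l (f i)) :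
    sRefl (f i + ε • f j) l = sRefl (f j) (sRefl (f i) l) :=
  ext_basis f fun k => by
    simp only [sRefl_add_smul_apply hij, sRefl_basis_apply, ← h, smul_smul, Int.units_mul_self,
      one_smul]
    split_ifs <;> simp_all

lemma sRefl_basis_of_eq_zero (hij : i ≠ j) (hj : l (f j) = 0) :
    sRefl (f i) l = sRefl (f i + f j) (sRefl (f i - f j) l) :=
  ext_basis f fun k => by
    simp only [sRefl_add_apply hij, sRefl_sub_apply hij, sRefl_basis_apply]
    split_ifs <;> simp_all

/-- The functional `v ↦ ∑_{k ≤ c} ⟨e_k, v⟩`; for `c ∈ J` it vanishes on `Φ_I`, see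
`NormalizedFrame.headSum_eq_zero`. -/
def headSum (f : OrthonormalBasis (Fin n) ℝ E) (c : Fin n) : E →ₗ[ℝ] ℝ :=
  ∑ k ∈ Finset.Iic c, innerₗ E (f k)

lemma headSum_basis (c i : Fin n) : headSum f c (f i) = if i ≤ c then 1 else 0 := by
  simp [headSum, OrthonormalBasis.inner_eq_ite]

end Coordinates

section Frames

variable {n : ℕ} {S : RootSys V} {I : Finset V} {t : BCD} {f : OrthonormalBasis (Fin n) ℝ V}
  {J : Finset (Fin n)} {i j k : Fin n} {l : HStar V}

/-- In the orthonormal basis `f`, indexed from `0`, the root system `S` has type `t`, and `I`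
consists of the simple roots whose index is not in `J`. -/
structure ClassicalFrame (S : RootSys V) (I : Finset V) (t : BCD)
    (f : OrthonormalBasis (Fin n) ℝ V) (J : Finset (Fin n)) : Prop where
  mem_pos_iff : ∀ v, v ∈ S.pos ↔
    (∃ i j, i < j ∧ ∃ ε : ℤˣ, v = f i + ε • f j) ∨ t ≠ .D ∧ ∃ i, v = scale t • f i
  mem_I_iff : ∀ v, v ∈ I ↔ ∃ k ∉ J, v = simpleRoot t (scale t) f k
  two_le : t = .D → 2 ≤ n

/-- A frame in which, in type `D`, `J` contains the last index as soon as it contains the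
penultimate one. This excludes `q_{m-1} = n - 1`, for which `Φ_I` is not a product of systems of
type `A` on the blocks and one of type `D` on the tail; see `ClassicalFrame.flip`. -/
structure NormalizedFrame (S : RootSys V) (I : Finset V) (t : BCD)
    (f : OrthonormalBasis (Fin n) ℝ V) (J : Finset (Fin n)) : Prop
    extends ClassicalFrame S I t f J where
  last_mem : t = .D → ∀ c ∈ J, c.1 + 2 = n → ∀ k : Fin n, k.1 + 1 = n → k ∈ J

lemma NormalizedFrame.headSum_eq_zero (F : NormalizedFrame S I t f J) {c : Fin n} (hc : c ∈ J)
    {v : V} (hv : v ∈ Submodule.span ℤ (I : Set V)) : headSum f c v = 0 := by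
  suffices Submodule.span ℤ (I : Set V) ≤ (LinearMap.ker (headSum f c)).restrictScalars ℤ from
    this hv
  refine Submodule.span_le.2 fun x hx => ?_
  obtain ⟨k, hk, rfl⟩ := (F.mem_I_iff x).1 hx
  have hkc : k ≠ c := fun h => hk (h ▸ hc)
  change headSum f c _ = 0
  rcases lt_or_ge (k.1 + 1) n with hlt | hge
  · have : k ≤ c ↔ (⟨k + 1, hlt⟩ : Fin n) ≤ c := by
      simp only [Fin.le_def, ne_eq, Fin.ext_iff] at hkc ⊢
      omega
    simp [simpleRoot_of_lt hlt, headSum_basis, this]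
  · have not_le : ¬ k ≤ c := by
      simp only [Fin.le_def, ne_eq, Fin.ext_iff] at hkc ⊢
      omega
    rw [simpleRoot_last (by omega)]
    split_ifs with ht
    · have hpen : ¬ (⟨k - 1, by omega⟩ : Fin n) ≤ c := fun h => by
        have := F.two_le ht
        rw [Fin.le_def] at h not_le
        exact hk (F.last_mem ht c hc (by simp only at h; omega) k (by omega))
      simp [headSum_basis, not_le, hpen]
    · simp [headSum_basis, not_le]

lemma ClassicalFrame.simpleRoot_mem_span (F : ClassicalFrame S I t f J) : ∀ k ∉ J,
    simpleRoot t (scale t) f k ∈ (Submodule.span ℤ (I : Set V)).toAddSubmonoid.toAddSubsemigroup :=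
  fun k hk => Submodule.subset_span ((F.mem_I_iff _).2 ⟨k, hk, rfl⟩)

lemma ClassicalFrame.add_smul_mem_pos (F : ClassicalFrame S I t f J) (hij : i < j) (ε : ℤˣ) :
    f i + ε • f j ∈ S.pos :=
  (F.mem_pos_iff _).2 (Or.inl ⟨i, j, hij, ε, rfl⟩)

lemma NormalizedFrame.sub_mem_PhiI_iff (F : NormalizedFrame S I t f J) (hij : i < j) :
    f i - f j ∈ PhiI S I ↔ SameBlock J i j := by
  refine ⟨fun h c hc => ?_, fun h => ⟨?_, sub_mem_of_sameBlock F.simpleRoot_mem_span hij h⟩⟩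
  · have h0 := F.headSum_eq_zero hc h.2
    rw [map_sub, headSum_basis, headSum_basis] at h0
    have le_iff : i ≤ c ↔ j ≤ c := by
      by_cases hi : i ≤ c <;> by_cases hj : j ≤ c <;> simp [hi, hj] at h0 ⊢
    simpa only [not_le] using not_congr le_iff
  · simpa [sub_eq_add_neg] using S.pos_subset (F.add_smul_mem_pos hij (-1))

lemma NormalizedFrame.add_mem_PhiI_iff (F : NormalizedFrame S I t f J) (hij : i < j) :
    f i + f j ∈ PhiI S I ↔ InTail J i := by
  refine ⟨fun h c hc => ?_,
    fun h => ⟨?_, add_mem_of_inTail F.simpleRoot_mem_span (scale_eq t) hij h⟩⟩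
  · have h0 := F.headSum_eq_zero hc h.2
    rw [map_add, headSum_basis, headSum_basis] at h0
    by_contra hci
    rw [if_pos (not_lt.1 hci)] at h0
    split_ifs at h0 <;> norm_num at h0
  · simpa using S.pos_subset (F.add_smul_mem_pos hij 1)

lemma NormalizedFrame.smul_mem_PhiI_iff (F : NormalizedFrame S I t f J) (ht : t ≠ .D) :
    scale t • f i ∈ PhiI S I ↔ InTail J i := by
  refine ⟨fun h c hc => ?_, fun h => ⟨S.pos_subset ((F.mem_pos_iff _).2 (Or.inr ⟨ht, i, rfl⟩)),
    smul_mem_of_inTail F.simpleRoot_mem_span (scale_eq t) ht h⟩⟩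
  have h0 := F.headSum_eq_zero hc h.2
  rw [map_smul, headSum_basis] at h0
  by_contra hci
  simp [not_lt.1 hci, scale_ne_zero] at h0

lemma NormalizedFrame.sub_mem_PhiI (F : NormalizedFrame S I t f J) (hij : i ≠ j)
    (h : SameBlock J i j) : f i - f j ∈ PhiI S I := by
  rcases hij.lt_or_gt with hij | hij
  · exact (F.sub_mem_PhiI_iff hij).2 h
  · rw [← neg_sub]
    exact isSubsystem_PhiI.neg_mem ((F.sub_mem_PhiI_iff hij).2 h.symm)

lemma NormalizedFrame.add_mem_PhiI (F : NormalizedFrame S I t f J) (hij : i ≠ j)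
    (hi : InTail J i) (hj : InTail J j) : f i + f j ∈ PhiI S I := by
  rcases hij.lt_or_gt with hij | hij
  · exact (F.add_mem_PhiI_iff hij).2 hi
  · rw [add_comm]
    exact (F.add_mem_PhiI_iff hij).2 hj

lemma NormalizedFrame.add_smul_mem_PhiI (F : NormalizedFrame S I t f J) (hij : i ≠ j)
    (hi : InTail J i) (hj : InTail J j) (ε : ℤˣ) : f i + ε • f j ∈ PhiI S I := by
  rcases Int.units_eq_one_or ε with rfl | rfl
  · simpa using F.add_mem_PhiI hij hi hj
  · simpa [sub_eq_add_neg] using F.sub_mem_PhiI hij (hi.sameBlock hj)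

lemma NormalizedFrame.eq_of_coord_eq (F : NormalizedFrame S I t f J)
    (hl : IsRegularOn (PhiI S I) l) (h : SameBlock J i j) (heq : l (f i) = l (f j)) : i = j := by
  by_contra hij
  exact hl _ (F.sub_mem_PhiI hij h) (by rw [map_sub, heq, sub_self])

lemma NormalizedFrame.coord_ne_zero (F : NormalizedFrame S I t f J)
    (hl : IsRegularOn (PhiI S I) l) (ht : t ≠ .D) (hi : InTail J i) : l (f i) ≠ 0 :=
  fun h => hl _ ((F.smul_mem_PhiI_iff ht).2 hi) (by rw [map_smul, h, smul_zero])

end Frames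

section Positivity

lemma IsPosInt.add {x y : ℂ} (hx : IsPosInt x) (hy : IsPosInt y) : IsPosInt (x + y) := by
  obtain ⟨a, ha, rfl⟩ := hx
  obtain ⟨b, hb, rfl⟩ := hy
  exact ⟨a + b, add_pos ha hb, by push_cast; rfl⟩

lemma IsPosInt.ne_zero {x : ℂ} (hx : IsPosInt x) : x ≠ 0 := by
  obtain ⟨a, ha, rfl⟩ := hx
  exact_mod_cast ha.ne'

variable {E : Type*} [NormedAddCommGroup E] [InnerProductSpace ℝ E]

/-- The vectors on which `l` takes a positive integral value. -/
def posIntSubsemigroup (l : HStar E) : AddSubsemigroup E where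
  carrier := {v | IsPosInt (l v)}
  add_mem' {v w} hv hw := by
    change IsPosInt (l (v + w))
    rw [map_add]
    exact IsPosInt.add hv hw

end Positivity

section Dominance

variable {n : ℕ} {S : RootSys V} {I : Finset V} {t : BCD} {f : OrthonormalBasis (Fin n) ℝ V}
  {J : Finset (Fin n)} {i j k : Fin n} {l : HStar V}

lemma ClassicalFrame.coroot_simpleRoot (F : ClassicalFrame S I t f J) (k : Fin n) :
    coroot (simpleRoot t (scale t) f k) = simpleRoot t (2 / scale t) f k := by
  rcases lt_or_ge (k.1 + 1) n with hlt | hge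
  · have h := coroot_add_smul (f := f) (i := k) (j := ⟨k + 1, hlt⟩)
      (by simp [Fin.ext_iff]) (-1)
    simpa [simpleRoot_of_lt hlt, sub_eq_add_neg] using h
  · rw [simpleRoot_last (by omega), simpleRoot_last (by omega)]
    split_ifs with ht
    · have := F.two_le ht
      have h := coroot_add_smul (f := f) (i := ⟨k - 1, by omega⟩) (j := k)
        (by simp only [ne_eq, Fin.ext_iff]; omega) 1
      simpa using h
    · exact coroot_smul_basis (scale_ne_zero t) k

lemma ClassicalFrame.simpleRoot_mem_posInt (F : ClassicalFrame S I t f J)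
    (hl : l ∈ LambdaP (I : Set V)) :
    ∀ k ∉ J, simpleRoot t (2 / scale t) f k ∈ posIntSubsemigroup l := fun k hk => by
  rw [← F.coroot_simpleRoot]
  exact hl _ ((F.mem_I_iff _).2 ⟨k, hk, rfl⟩)

lemma ClassicalFrame.isPosInt_sub (F : ClassicalFrame S I t f J) (hl : l ∈ LambdaP (I : Set V))
    (hij : i < j) (h : SameBlock J i j) : IsPosInt (l (f i) - l (f j)) := by
  rw [← map_sub]
  exact sub_mem_of_sameBlock (F.simpleRoot_mem_posInt hl) hij h

lemma ClassicalFrame.isPosInt_add (F : ClassicalFrame S I t f J) (hl : l ∈ LambdaP (I : Set V))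
    (hij : i < j) (hi : InTail J i) : IsPosInt (l (f i) + l (f j)) := by
  rw [← map_add]
  exact add_mem_of_inTail (F.simpleRoot_mem_posInt hl) (two_div_scale_eq t) hij hi

lemma ClassicalFrame.isPosInt_smul (F : ClassicalFrame S I t f J) (hl : l ∈ LambdaP (I : Set V))
    (ht : t ≠ .D) (hi : InTail J i) : IsPosInt (l ((2 / scale t) • f i)) :=
  smul_mem_of_inTail (F.simpleRoot_mem_posInt hl) (two_div_scale_eq t) ht hi

lemma NormalizedFrame.isRegularOn (F : NormalizedFrame S I t f J) (hl : l ∈ LambdaP (I : Set V)) :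
    IsRegularOn (PhiI S I) l := by
  suffices ∀ α ∈ PhiI S I, α ∈ S.pos → l α ≠ 0 by
    intro α hα
    rcases S.mem_pos_or α hα.1 with hpos | hpos
    · exact this α hα hpos
    · simpa using this (-α) (isSubsystem_PhiI.neg_mem hα) hpos
  intro α hα hpos
  rcases (F.mem_pos_iff α).1 hpos with ⟨i, j, hij, ε, rfl⟩ | ⟨ht, i, rfl⟩
  · rcases Int.units_eq_one_or ε with rfl | rfl
    · rw [one_smul] at hα ⊢
      rw [map_add]
      exact (F.isPosInt_add hl hij ((F.add_mem_PhiI_iff hij).1 hα)).ne_zero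
    · rw [Units.neg_smul, one_smul, ← sub_eq_add_neg] at hα ⊢
      rw [map_sub]
      exact (F.isPosInt_sub hl hij ((F.sub_mem_PhiI_iff hij).1 hα)).ne_zero
  · have h := (F.isPosInt_smul hl ht ((F.smul_mem_PhiI_iff ht).1 hα)).ne_zero
    rw [map_smul] at h ⊢
    exact smul_ne_zero (scale_ne_zero t) (right_ne_zero_of_smul h)

end Dominance

section BlockInvariants

variable {E : Type*} [NormedAddCommGroup E] [InnerProductSpace ℝ E] {n : ℕ}
  {f : OrthonormalBasis (Fin n) ℝ E} {J : Finset (Fin n)} {i j k : Fin n} {l l' : HStar E}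

/-- The set of coordinates of `l` in the block of `i`. Outside the tail, where `Φ_I` is of type
`A`, it is an invariant of the Weyl group orbit of `l`. -/
def blockValues (J : Finset (Fin n)) (f : OrthonormalBasis (Fin n) ℝ E) (l : HStar E)
    (i : Fin n) : Set ℂ :=
  (fun k => l (f k)) '' {k | SameBlock J i k}

/-- The indices outside the tail whose coordinate in `l` no longer occurs in their block of `m`. -/
def lostIndices (J : Finset (Fin n)) (f : OrthonormalBasis (Fin n) ℝ E) (l m : HStar E) :
    Set (Fin n) :=
  {k | ¬ InTail J k ∧ l (f k) ∉ blockValues J f m k}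

lemma lostIndices_congr {m m' : HStar E}
    (h : ∀ k, ¬ InTail J k → blockValues J f m k = blockValues J f m' k) :
    lostIndices J f l m = lostIndices J f l m' :=
  Set.ext fun k => and_congr_right fun hk => by rw [h k hk]

/-- The product of the coordinates of `l` in the tail. In type `D` the Weyl group of `Φ_I` only
makes even sign changes in the tail, so that it preserves this product. -/
def tailProd (J : Finset (Fin n)) (f : OrthonormalBasis (Fin n) ℝ E) (l : HStar E) : ℂ :=
  ∏ k with InTail J k, l (f k)

lemma tailProd_congr (h : ∀ k, InTail J k → l (f k) = l' (f k)) :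
    tailProd J f l = tailProd J f l' :=
  Finset.prod_congr rfl fun k hk => h k (Finset.mem_filter.1 hk).2

lemma tailProd_sRefl_add_smul (hij : i ≠ j) (hi : InTail J i) (hj : InTail J j) (ε : ℤˣ)
    (l : HStar E) : tailProd J f (sRefl (f i + ε • f j) l) = tailProd J f l := by
  have mem : ∀ k, k ∈ ({k | InTail J k} : Finset (Fin n)) ↔ InTail J k := by simp
  have hj' : j ∈ ({k | InTail J k} : Finset (Fin n)).erase i :=
    Finset.mem_erase.2 ⟨hij.symm, (mem j).2 hj⟩
  simp only [tailProd, ← Finset.mul_prod_erase _ _ ((mem i).2 hi),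
    ← Finset.mul_prod_erase _ _ hj', sRefl_add_smul_apply hij, if_true, if_neg hij.symm]
  have rest : ∀ k ∈ (({k | InTail J k} : Finset (Fin n)).erase i).erase j,
      (if k = i then -(ε • l (f j)) else if k = j then -(ε • l (f i)) else l (f k)) = l (f k) :=
    fun k hk => by
      simp only [Finset.mem_erase] at hk
      rw [if_neg hk.2.1, if_neg hk.1]
  rw [Finset.prod_congr rfl rest]
  rcases Int.units_eq_one_or ε with rfl | rfl <;> simp <;> ring

lemma tailProd_eq_neg (hk : InTail J k) (h : l' (f k) = -l (f k))
    (hoff : ∀ z, InTail J z → z ≠ k → l' (f z) = l (f z)) :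
    tailProd J f l' = -tailProd J f l := by
  have mem : k ∈ ({k | InTail J k} : Finset (Fin n)) := by simpa using hk
  rw [tailProd, tailProd, ← Finset.mul_prod_erase _ _ mem, ← Finset.mul_prod_erase _ _ mem, h,
    neg_mul]
  congr 2
  refine Finset.prod_congr rfl fun z hz => ?_
  simp only [Finset.mem_erase, Finset.mem_filter, Finset.mem_univ, true_and] at hz
  exact hoff z hz.2 hz.1

end BlockInvariants

section Invariants

variable {n : ℕ} {S : RootSys V} {I : Finset V} {t : BCD} {f : OrthonormalBasis (Fin n) ℝ V}
  {J : Finset (Fin n)} {i j k : Fin n} {ε : ℤˣ} {l l' : HStar V} {w : V ≃ₗ[ℝ] V}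

lemma NormalizedFrame.exists_sameBlock_sRefl_apply (F : NormalizedFrame S I t f J)
    (hk : ¬ InTail J k) {α : V} (hα : α ∈ PhiI S I) (l : HStar V) :
    ∃ k', SameBlock J k k' ∧ sRefl α l (f k) = l (f k') := by
  wlog hpos : α ∈ S.pos generalizing α
  · simpa [← wAct_reflV, reflV_neg] using
      this (isSubsystem_PhiI.neg_mem hα) ((S.mem_pos_or α hα.1).resolve_left hpos)
  rcases (F.mem_pos_iff α).1 hpos with ⟨i, j, hij, ε, rfl⟩ | ⟨ht, i, rfl⟩
  · rw [sRefl_add_smul_apply hij.ne]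
    rcases Int.units_eq_one_or ε with rfl | rfl
    · rw [one_smul, F.add_mem_PhiI_iff hij] at hα
      refine ⟨k, .refl k, ?_⟩
      rw [if_neg (fun h : k = i => hk (h ▸ hα)),
        if_neg (fun h : k = j => hk (h ▸ hα.mono hij.le))]
    · rw [Units.neg_smul, one_smul, ← sub_eq_add_neg, F.sub_mem_PhiI_iff hij] at hα
      split_ifs with hki hkj
      · exact ⟨j, hki ▸ hα, by simp⟩
      · exact ⟨i, hkj ▸ hα.symm, by simp⟩
      · exact ⟨k, .refl k, rfl⟩
  · refine ⟨k, .refl k, ?_⟩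
    rw [sRefl_smul_apply (scale_ne_zero t),
      if_neg (fun h : k = i => hk (h ▸ (F.smul_mem_PhiI_iff ht).1 hα))]

lemma NormalizedFrame.exists_sameBlock_wAct_apply (F : NormalizedFrame S I t f J)
    (hw : w ∈ weyl (PhiI S I)) (hk : ¬ InTail J k) (l : HStar V) :
    ∃ k', SameBlock J k k' ∧ wAct w l (f k) = l (f k') := by
  induction hw using weyl_induction generalizing k with
  | one => exact ⟨k, .refl k, rfl⟩
  | reflV_mul α hα w _ ih =>
    obtain ⟨a, hka, ha⟩ := F.exists_sameBlock_sRefl_apply hk hα (wAct w l)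
    obtain ⟨b, hab, hb⟩ := ih (hka.inTail_iff.not.1 hk)
    exact ⟨b, hka.trans hab, by rw [wAct_mul, wAct_reflV, ha, hb]⟩

lemma NormalizedFrame.blockValues_wAct (F : NormalizedFrame S I t f J)
    (hw : w ∈ weyl (PhiI S I)) (hi : ¬ InTail J i) (l : HStar V) :
    blockValues J f (wAct w l) i = blockValues J f l i := by
  have subset : ∀ u ∈ weyl (PhiI S I), ∀ m : HStar V,
      blockValues J f (wAct u m) i ⊆ blockValues J f m i := by
    rintro u hu m _ ⟨k, hk, rfl⟩
    obtain ⟨k', hkk', h⟩ := F.exists_sameBlock_wAct_apply hu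
      (SameBlock.inTail_iff hk |>.not.1 hi) m
    exact ⟨k', SameBlock.trans hk hkk', h.symm⟩
  refine (subset w hw l).antisymm ?_
  have h := subset w⁻¹ (inv_mem hw) (wAct w l)
  rwa [← wAct_mul, inv_mul_cancel, wAct_one] at h

lemma NormalizedFrame.coord_eq_of_blockValues_eq (F : NormalizedFrame S I t f J)
    (hl : IsRegularOn (PhiI S I) l) (h : blockValues J f l i = blockValues J f l' i)
    (hoff : ∀ k, SameBlock J i k → k ≠ i → l (f k) = l' (f k)) : l (f i) = l' (f i) := by
  obtain ⟨k, hk, hki⟩ : l (f i) ∈ blockValues J f l' i := h ▸ ⟨i, .refl i, rfl⟩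
  by_cases hne : k = i
  · rw [← hki, hne]
  · have heq : l (f i) = l (f k) := by rw [hoff k hk hne, ← hki]
    exact (hne (F.eq_of_coord_eq hl hk heq).symm).elim

lemma NormalizedFrame.tailProd_sRefl (F : NormalizedFrame S I .D f J) {α : V}
    (hα : α ∈ PhiI S I) (l : HStar V) : tailProd J f (sRefl α l) = tailProd J f l := by
  wlog hpos : α ∈ S.pos generalizing α
  · simpa [← wAct_reflV, reflV_neg] using
      this (isSubsystem_PhiI.neg_mem hα) ((S.mem_pos_or α hα.1).resolve_left hpos)
  obtain ⟨i, j, hij, ε, rfl⟩ := ((F.mem_pos_iff α).1 hpos).resolve_right (by simp)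
  rcases Int.units_eq_one_or ε with rfl | rfl
  · have hi : InTail J i := by simpa [F.add_mem_PhiI_iff hij] using hα
    exact tailProd_sRefl_add_smul hij.ne hi (hi.mono hij.le) 1 l
  · have hsame : SameBlock J i j := by
      simpa [← sub_eq_add_neg, F.sub_mem_PhiI_iff hij] using hα
    by_cases hi : InTail J i
    · exact tailProd_sRefl_add_smul hij.ne hi (hsame.inTail_iff.1 hi) (-1) l
    · refine tailProd_congr fun k hk => ?_
      rw [sRefl_add_smul_apply hij.ne, if_neg (fun h : k = i => hi (h ▸ hk)),
        if_neg (fun h : k = j => hi (hsame.inTail_iff.2 (h ▸ hk)))]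

lemma NormalizedFrame.tailProd_wAct (F : NormalizedFrame S I .D f J)
    (hw : w ∈ weyl (PhiI S I)) (l : HStar V) : tailProd J f (wAct w l) = tailProd J f l := by
  induction hw using weyl_induction with
  | one => rfl
  | reflV_mul α hα w _ ih => rw [wAct_mul, wAct_reflV, F.tailProd_sRefl hα, ih]

lemma NormalizedFrame.exists_tail_coord_eq_zero (F : NormalizedFrame S I .D f J)
    (hw : w ∈ weyl (PhiI S I)) (hl' : l' = wAct w l) (hk : InTail J k) (h : l' (f k) = -l (f k))
    (hoff : ∀ z, InTail J z → z ≠ k → l' (f z) = l (f z)) : ∃ z, InTail J z ∧ l (f z) = 0 := by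
  have hneg := tailProd_eq_neg hk h hoff
  rw [hl', F.tailProd_wAct hw, self_eq_neg, tailProd, Finset.prod_eq_zero_iff] at hneg
  simpa using hneg

end Invariants

section RootKinds

variable {E : Type*} [NormedAddCommGroup E] [InnerProductSpace ℝ E] {n : ℕ}

/-- The positive roots outside `Φ_I` whose reflection, up to the Weyl group of `Φ_I` and up to
signs in the tail, negates the `i`-th coordinate of `l` and fixes the others. -/
inductive NegatesCoord (t : BCD) (f : OrthonormalBasis (Fin n) ℝ E) (J : Finset (Fin n))
    (l : HStar E) (i : Fin n) : E → Prop
  | short (ht : t ≠ .D) : NegatesCoord t f J l i (scale t • f i)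
  | zero {j : Fin n} (hj : SameBlock J i j) (h : l (f j) = 0) : NegatesCoord t f J l i (f i + f j)
  | tail {k : Fin n} {ε : ℤˣ} (hk : InTail J k) (h : ε • l (f k) = l (f i)) :
      NegatesCoord t f J l i (f i + ε • f k)

/-- The three kinds of roots in `Ψ_l⁺`. Those of the first two are determined by the Weyl group
orbit of `s_β l`, so that only the third kind allows cancellation in the Jantzen coefficient. -/
inductive RootKind (t : BCD) (f : OrthonormalBasis (Fin n) ℝ E) (J : Finset (Fin n))
    (l : HStar E) : E → Prop
  | pair {i j : Fin n} {ε : ℤˣ} (hij : i < j) (hj : ¬ InTail J j)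
      (hadd : l (f i) + ε • l (f j) ≠ 0)
      (hsame : SameBlock J i j → ε = 1 ∧ l (f i) ≠ 0 ∧ l (f j) ≠ 0) :
      RootKind t f J l (f i + ε • f j)
  | cross {i k : Fin n} {ε : ℤˣ} (hi : ¬ InTail J i) (hk : InTail J k)
      (hadd : l (f i) + ε • l (f k) ≠ 0) (hsub : ε • l (f k) ≠ l (f i)) :
      RootKind t f J l (f i + ε • f k)
  | negates {i : Fin n} {β : E} (hi : ¬ InTail J i) (h0 : l (f i) ≠ 0)
      (h : NegatesCoord t f J l i β) : RootKind t f J l β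

end RootKinds

section Classification

variable {n : ℕ} {S : RootSys V} {I : Finset V} {Φ' : Set V} {t : BCD}
  {f : OrthonormalBasis (Fin n) ℝ V} {J : Finset (Fin n)} {i j k k' : Fin n} {ε ε' : ℤˣ}
  {l m : HStar V} {β γ : V}

lemma NormalizedFrame.rootKind (F : NormalizedFrame S I t f J)
    (hβ : β ∈ PsiP S (PhiI S I) Φ' l) : RootKind t f J l β := by
  obtain ⟨⟨-, hpos⟩, hβI, hint⟩ := hβ
  have hne := hint.ne_zero
  rcases (F.mem_pos_iff β).1 hpos with ⟨i, j, hij, ε, rfl⟩ | ⟨ht, i, rfl⟩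
  · rw [coroot_add_smul hij.ne, map_add, map_units_smul] at hne
    have hi : ¬ InTail J i := fun hi =>
      hβI (F.add_smul_mem_PhiI hij.ne hi (hi.mono hij.le) ε)
    by_cases hj : InTail J j
    · by_cases heq : ε • l (f j) = l (f i)
      · refine .negates hi (fun h0 => hne ?_) (.tail hj heq)
        rw [heq, h0, add_zero]
      · exact .cross hi hj hne heq
    · by_cases hsame : SameBlock J i j
      · obtain rfl : ε = 1 := (Int.units_eq_one_or ε).resolve_right fun hε => hβI <| by
          simpa [hε, ← sub_eq_add_neg] using F.sub_mem_PhiI hij.ne hsame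
        rw [one_smul] at hne
        by_cases hi0 : l (f i) = 0
        · rw [one_smul, add_comm]
          exact .negates hj (by simpa [hi0] using hne) (.zero hsame.symm hi0)
        by_cases hj0 : l (f j) = 0
        · rw [one_smul]
          exact .negates hi hi0 (.zero hsame hj0)
        · exact .pair hij hj (by rwa [one_smul]) fun _ => ⟨rfl, hi0, hj0⟩
      · exact .pair hij hj hne fun h => (hsame h).elim
  · rw [coroot_smul_basis (scale_ne_zero t), map_smul] at hne
    exact .negates (fun hi => hβI ((F.smul_mem_PhiI_iff ht).2 hi)) (right_ne_zero_of_smul hne)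
      (.short ht)

lemma NormalizedFrame.lostIndices_eq_singleton (F : NormalizedFrame S I t f J)
    (hl : IsRegularOn (PhiI S I) l) (hi : ¬ InTail J i) (hne : m (f i) ≠ l (f i))
    (hoff : ∀ k, ¬ InTail J k → k ≠ i → m (f k) = l (f k)) : lostIndices J f l m = {i} := by
  ext k
  refine ⟨fun ⟨hk, hlost⟩ => by_contra fun hki => hlost ⟨k, .refl k, hoff k hk hki⟩, ?_⟩
  rintro rfl
  refine ⟨hi, ?_⟩
  rintro ⟨k', hk', h⟩
  by_cases heq : k' = k
  · exact hne (heq ▸ h)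
  · have hk'i := hoff k' (SameBlock.inTail_iff hk' |>.not.1 hi) heq
    exact heq (F.eq_of_coord_eq hl hk' (hk'i.symm.trans h).symm).symm

lemma NormalizedFrame.lostIndices_pair (F : NormalizedFrame S I t f J)
    (hl : IsRegularOn (PhiI S I) l) (hij : i < j) (hj : ¬ InTail J j)
    (hadd : l (f i) + ε • l (f j) ≠ 0)
    (hsame : SameBlock J i j → ε = 1 ∧ l (f i) ≠ 0 ∧ l (f j) ≠ 0) :
    lostIndices J f l (sRefl (f i + ε • f j) l) = {i, j} := by
  have apply_eq := sRefl_add_smul_apply (f := f) hij.ne ε l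
  have hadd' : ε • l (f i) + l (f j) ≠ 0 := by
    rcases Int.units_eq_one_or ε with rfl | rfl
    · simpa using hadd
    · simpa [neg_add_eq_zero, add_neg_eq_zero] using hadd
  ext k
  refine ⟨fun ⟨_, hlost⟩ => ?_, ?_⟩
  · by_contra hk
    rw [Set.mem_insert_iff, Set.mem_singleton_iff, not_or] at hk
    exact hlost ⟨k, .refl k, by simp only [apply_eq, hk.1, hk.2, if_false]⟩
  rintro (rfl | rfl)
  · refine ⟨fun h => hj (h.mono hij.le), ?_⟩
    rintro ⟨k', hk', h⟩
    simp only [apply_eq] at h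
    split_ifs at h with h1 h2
    · exact hadd (by rw [← h, neg_add_cancel])
    · subst h2
      obtain ⟨rfl, h0, -⟩ := hsame hk'
      exact h0 (neg_eq_self.1 (by simpa using h))
    · exact h1 (F.eq_of_coord_eq hl hk' h.symm).symm
  · refine ⟨hj, ?_⟩
    rintro ⟨k', hk', h⟩
    simp only [apply_eq] at h
    split_ifs at h with h1 h2
    · subst h1
      obtain ⟨rfl, -, h0⟩ := hsame (SameBlock.symm hk')
      exact h0 (neg_eq_self.1 (by simpa using h))
    · exact hadd' (by rw [← h, add_neg_cancel])
    · exact h2 (F.eq_of_coord_eq hl hk' h.symm).symm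

lemma NormalizedFrame.lostIndices_cross (F : NormalizedFrame S I t f J)
    (hl : IsRegularOn (PhiI S I) l) (hi : ¬ InTail J i) (hk : InTail J k)
    (hadd : l (f i) + ε • l (f k) ≠ 0) :
    lostIndices J f l (sRefl (f i + ε • f k) l) = {i} := by
  have hik : i ≠ k := fun h => hi (h ▸ hk)
  refine F.lostIndices_eq_singleton hl hi (fun h => hadd ?_) fun z hz hzi => ?_
  · rw [sRefl_add_smul_apply hik, if_pos rfl] at h
    rw [← h, neg_add_cancel]
  · rw [sRefl_add_smul_apply hik, if_neg hzi, if_neg (fun h : z = k => hz (h ▸ hk))]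

lemma NormalizedFrame.blockValues_of_negatesCoord (F : NormalizedFrame S I t f J)
    (hi : ¬ InTail J i) (h0 : l (f i) ≠ 0) (h : NegatesCoord t f J l i β) (hk : ¬ InTail J k) :
    blockValues J f (sRefl β l) k = blockValues J f (sRefl (f i) l) k := by
  cases h with
  | short => rw [sRefl_smul_basis (scale_ne_zero t)]
  | @zero j hj hj0 =>
    have hij : i ≠ j := fun h => h0 (h ▸ hj0)
    rw [sRefl_add_of_eq_zero hij hj0, ← wAct_reflV (f i - f j),
      F.blockValues_wAct (reflV_mem_weyl (F.sub_mem_PhiI hij hj)) hk]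
  | @tail z ε hz hzi =>
    rw [sRefl_add_smul_of_eq (fun h : i = z => hi (h ▸ hz)) hzi]
    refine Set.image_congr fun k' hk' => ?_
    have hk'z : k' ≠ z := fun h => hk ((SameBlock.inTail_iff hk').2 (h ▸ hz))
    rw [sRefl_basis_apply, if_neg hk'z]

lemma NormalizedFrame.lostIndices_of_negatesCoord (F : NormalizedFrame S I t f J)
    (hl : IsRegularOn (PhiI S I) l) (hi : ¬ InTail J i) (h0 : l (f i) ≠ 0)
    (h : NegatesCoord t f J l i β) : lostIndices J f l (sRefl β l) = {i} := by
  rw [lostIndices_congr fun k hk => F.blockValues_of_negatesCoord hi h0 h hk]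
  refine F.lostIndices_eq_singleton hl hi ?_ fun k _ hki => ?_
  · rw [sRefl_basis_apply, if_pos rfl]
    exact fun h => h0 (neg_eq_self.1 h)
  · rw [sRefl_basis_apply, if_neg hki]

lemma NormalizedFrame.eq_of_units_smul_coord_eq (F : NormalizedFrame S I t f J)
    (hl : IsRegularOn (PhiI S I) l) (hk : InTail J k) (hk' : InTail J k')
    (h : ε • l (f k) = ε' • l (f k')) : k = k' := by
  by_contra hne
  refine hl _ (F.add_smul_mem_PhiI hne hk hk' (-(ε * ε'))) ?_
  rw [map_add, map_units_smul, Units.neg_smul, mul_smul, ← h, smul_smul, Int.units_mul_self,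
    one_smul, add_neg_cancel]

lemma NormalizedFrame.pair_unique (F : NormalizedFrame S I t f J) (hij : i < j)
    (hj : ¬ InTail J j) (hreg : IsRegularOn (PhiI S I) (sRefl (f i + ε • f j) l))
    (hadd : l (f i) + ε • l (f j) ≠ 0) (hsame : SameBlock J i j → ε = 1)
    (hsame' : SameBlock J i j → ε' = 1)
    (hval : ∀ k, ¬ InTail J k → blockValues J f (sRefl (f i + ε • f j) l) k =
      blockValues J f (sRefl (f i + ε' • f j) l) k) : ε = ε' := by
  by_cases h : SameBlock J i j
  · rw [hsame h, hsame' h]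
  have eq_at : ∀ k, ¬ InTail J k → (∀ k', SameBlock J k k' → k' ≠ k → k' ≠ i ∧ k' ≠ j) →
      sRefl (f i + ε • f j) l (f k) = sRefl (f i + ε' • f j) l (f k) := fun k hk hne =>
    F.coord_eq_of_blockValues_eq hreg (hval k hk) fun k' hkk' hk' => by
      obtain ⟨hi, hj⟩ := hne k' hkk' hk'
      simp only [sRefl_add_smul_apply hij.ne, hi, hj, if_false]
  have at_i := eq_at i (fun hi => hj (hi.mono hij.le)) fun k' hk' hne =>
    ⟨hne, fun hk'j => h (hk'j ▸ hk')⟩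
  have at_j := eq_at j hj fun k' hk' hne => ⟨fun hk'i => h (hk'i ▸ hk').symm, hne⟩
  simp only [sRefl_add_smul_apply hij.ne, if_true, hij.ne', if_false] at at_i at_j
  by_contra hne
  obtain rfl : ε' = -ε := Int.units_ne_iff_eq_neg.1 (Ne.symm hne)
  refine hadd ?_
  rcases Int.units_eq_one_or ε with rfl | rfl <;>
  · simp only [one_smul, Units.neg_smul, neg_neg, neg_eq_self, self_eq_neg] at at_i at_j
    simp [at_i, at_j]

lemma NormalizedFrame.cross_unique (F : NormalizedFrame S I t f J)
    (hl : IsRegularOn (PhiI S I) l) (hi : ¬ InTail J i) (hk : InTail J k) (hk' : InTail J k')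
    (hreg : IsRegularOn (PhiI S I) (sRefl (f i + ε • f k) l))
    (hadd : l (f i) + ε • l (f k) ≠ 0) {w : V ≃ₗ[ℝ] V} (hw : w ∈ weyl (PhiI S I))
    (h : sRefl (f i + ε' • f k') l = wAct w (sRefl (f i + ε • f k) l)) :
    f i + ε • f k = f i + ε' • f k' := by
  have ne_tail : ∀ {z}, InTail J z → i ≠ z := fun hz hiz => hi (hiz ▸ hz)
  have at_i := F.coord_eq_of_blockValues_eq hreg (h ▸ (F.blockValues_wAct hw hi _).symm)
    fun z hz hzi => by
      have hzt := hz.inTail_iff.not.1 hi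
      rw [sRefl_add_smul_apply (ne_tail hk), sRefl_add_smul_apply (ne_tail hk'), if_neg hzi,
        if_neg hzi, if_neg (fun h : z = k => hzt (h ▸ hk)),
        if_neg (fun h : z = k' => hzt (h ▸ hk'))]
  rw [sRefl_add_smul_apply (ne_tail hk), sRefl_add_smul_apply (ne_tail hk'), if_pos rfl,
    if_pos rfl, neg_inj] at at_i
  obtain rfl := F.eq_of_units_smul_coord_eq hl hk hk' at_i
  by_contra hne
  obtain rfl : ε' = -ε := Int.units_ne_iff_eq_neg.1 fun heq => hne (by rw [heq])
  have hk0 : l (f k) = 0 := by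
    rcases Int.units_eq_one_or ε with rfl | rfl <;>
      simpa only [one_smul, Units.neg_smul, neg_neg, neg_eq_self, self_eq_neg] using at_i
  obtain rfl : t = .D := by_contra fun ht => F.coord_ne_zero hl ht hk hk0
  have apply_tail : ∀ δ : ℤˣ, ∀ z, InTail J z →
      sRefl (f i + δ • f k) l (f z) = if z = k then -(δ • l (f i)) else l (f z) := fun δ z hz => by
    rw [sRefl_add_smul_apply (ne_tail hk), if_neg (ne_tail hz).symm]
  obtain ⟨z, hz, hz0⟩ := F.exists_tail_coord_eq_zero hw h hk
    (by rw [apply_tail _ k hk, apply_tail _ k hk, if_pos rfl, if_pos rfl, Units.neg_smul])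
    fun z hz hzk => by rw [apply_tail _ z hz, apply_tail _ z hz, if_neg hzk, if_neg hzk]
  rw [apply_tail ε z hz] at hz0
  split_ifs at hz0 with hzk
  · exact hadd (by simpa [hk0, smul_eq_zero_iff_eq] using hz0)
  · exact hzk (F.eq_of_units_smul_coord_eq (ε := 1) (ε' := 1) hl hz hk (by rw [hz0, hk0]))

lemma NormalizedFrame.not_cross_of_negatesCoord (F : NormalizedFrame S I t f J)
    (hi : ¬ InTail J i) (h0 : l (f i) ≠ 0) (hk : InTail J k)
    (hreg : IsRegularOn (PhiI S I) (sRefl (f i + ε • f k) l)) (hβ : NegatesCoord t f J l i β)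
    (hval : blockValues J f (sRefl (f i + ε • f k) l) i = blockValues J f (sRefl β l) i) :
    ε • l (f k) = l (f i) := by
  rw [F.blockValues_of_negatesCoord hi h0 hβ hi] at hval
  have hik : i ≠ k := fun h => hi (h ▸ hk)
  have at_i := F.coord_eq_of_blockValues_eq hreg hval fun z hz hzi => by
    rw [sRefl_add_smul_apply hik, sRefl_basis_apply, if_neg hzi, if_neg hzi,
      if_neg (fun h : z = k => hi (hz.inTail_iff.2 (h ▸ hk)))]
  rwa [sRefl_add_smul_apply hik, sRefl_basis_apply, if_pos rfl, if_pos rfl, neg_inj] at at_i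

lemma NormalizedFrame.blockValues_eq_of_mem_linkedRoots (F : NormalizedFrame S I t f J)
    (hβ : β ∈ linkedRoots S (PhiI S I) Φ' l m) (hγ : γ ∈ linkedRoots S (PhiI S I) Φ' l m)
    (hk : ¬ InTail J k) : blockValues J f (sRefl β l) k = blockValues J f (sRefl γ l) k := by
  obtain ⟨w, hw, h⟩ := exists_wAct_of_mem_linkedRoots hβ hγ
  rw [h, F.blockValues_wAct hw hk]

lemma NormalizedFrame.lostIndices_eq_of_mem_linkedRoots (F : NormalizedFrame S I t f J)
    (hβ : β ∈ linkedRoots S (PhiI S I) Φ' l m) (hγ : γ ∈ linkedRoots S (PhiI S I) Φ' l m) :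
    lostIndices J f l (sRefl β l) = lostIndices J f l (sRefl γ l) :=
  lostIndices_congr fun _ hk => F.blockValues_eq_of_mem_linkedRoots hβ hγ hk

lemma NormalizedFrame.eq_of_pair_mem_linkedRoots (F : NormalizedFrame S I t f J)
    (hl : IsRegularOn (PhiI S I) l) (hβ : f i + ε • f j ∈ linkedRoots S (PhiI S I) Φ' l m)
    (hij : i < j) (hj : ¬ InTail J j) (hadd : l (f i) + ε • l (f j) ≠ 0)
    (hsame : SameBlock J i j → ε = 1 ∧ l (f i) ≠ 0 ∧ l (f j) ≠ 0)
    (hγ : γ ∈ linkedRoots S (PhiI S I) Φ' l m) : γ = f i + ε • f j := by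
  have hlost := F.lostIndices_eq_of_mem_linkedRoots hβ hγ
  rw [F.lostIndices_pair hl hij hj hadd hsame] at hlost
  have ne_singleton : ∀ i', ({i, j} : Set (Fin n)) ≠ {i'} := fun i' h =>
    hij.ne ((h.le (by simp)).trans (h.le (by simp)).symm)
  cases F.rootKind (mem_linkedRoots.1 hγ).1.1 with
  | pair hij' hj' hadd' hsame' =>
    rw [F.lostIndices_pair hl hij' hj' hadd' hsame', Set.pair_eq_pair_iff] at hlost
    obtain ⟨rfl, rfl⟩ | ⟨rfl, rfl⟩ := hlost
    · rw [F.pair_unique hij hj (isRegularOn_of_mem_linkedRoots hβ) hadd (fun h => (hsame h).1)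
        (fun h => (hsame' h).1) fun k hk => F.blockValues_eq_of_mem_linkedRoots hβ hγ hk]
    · exact (hij.asymm hij').elim
  | cross hi' hk' hadd' _ =>
    rw [F.lostIndices_cross hl hi' hk' hadd'] at hlost
    exact (ne_singleton _ hlost).elim
  | negates hi' h0' hn =>
    rw [F.lostIndices_of_negatesCoord hl hi' h0' hn] at hlost
    exact (ne_singleton _ hlost).elim

lemma NormalizedFrame.eq_of_cross_mem_linkedRoots (F : NormalizedFrame S I t f J)
    (hl : IsRegularOn (PhiI S I) l) (hβ : f i + ε • f k ∈ linkedRoots S (PhiI S I) Φ' l m)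
    (hi : ¬ InTail J i) (hk : InTail J k) (hadd : l (f i) + ε • l (f k) ≠ 0)
    (hsub : ε • l (f k) ≠ l (f i)) (hγ : γ ∈ linkedRoots S (PhiI S I) Φ' l m) :
    γ = f i + ε • f k := by
  have hlost := F.lostIndices_eq_of_mem_linkedRoots hβ hγ
  rw [F.lostIndices_cross hl hi hk hadd] at hlost
  have hreg := isRegularOn_of_mem_linkedRoots hβ
  cases F.rootKind (mem_linkedRoots.1 hγ).1.1 with
  | pair hij' hj' hadd' hsame' =>
    exact (F.eq_of_pair_mem_linkedRoots hl hγ hij' hj' hadd' hsame' hβ).symm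
  | cross hi' hk' hadd' _ =>
    rw [F.lostIndices_cross hl hi' hk' hadd', Set.singleton_eq_singleton_iff] at hlost
    subst hlost
    obtain ⟨w, hw, h⟩ := exists_wAct_of_mem_linkedRoots hβ hγ
    exact (F.cross_unique hl hi hk hk' hreg hadd hw h).symm
  | negates hi' h0' hn =>
    rw [F.lostIndices_of_negatesCoord hl hi' h0' hn, Set.singleton_eq_singleton_iff] at hlost
    subst hlost
    exact (hsub (F.not_cross_of_negatesCoord hi h0' hk hreg hn
      (F.blockValues_eq_of_mem_linkedRoots hβ hγ hi))).elim

lemma NormalizedFrame.eq_or_negatesCoord (F : NormalizedFrame S I t f J)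
    (hl : IsRegularOn (PhiI S I) l) (hβ : β ∈ linkedRoots S (PhiI S I) Φ' l m) :
    (∀ γ ∈ linkedRoots S (PhiI S I) Φ' l m, γ = β) ∨
    ∃ i, ¬ InTail J i ∧ l (f i) ≠ 0 ∧ NegatesCoord t f J l i β := by
  cases F.rootKind (mem_linkedRoots.1 hβ).1.1 with
  | pair hij hj hadd hsame =>
    exact .inl fun γ hγ => F.eq_of_pair_mem_linkedRoots hl hβ hij hj hadd hsame hγ
  | cross hi hk hadd hsub =>
    exact .inl fun γ hγ => F.eq_of_cross_mem_linkedRoots hl hβ hi hk hadd hsub hγ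
  | negates hi h0 hn => exact .inr ⟨_, hi, h0, hn⟩

lemma NormalizedFrame.negatesCoord_of_mem_linkedRoots (F : NormalizedFrame S I t f J)
    (hl : IsRegularOn (PhiI S I) l) (hβ : β ∈ linkedRoots S (PhiI S I) Φ' l m)
    (hi : ¬ InTail J i) (h0 : l (f i) ≠ 0) (hn : NegatesCoord t f J l i β)
    (hγ : γ ∈ linkedRoots S (PhiI S I) Φ' l m) : NegatesCoord t f J l i γ := by
  cases F.rootKind (mem_linkedRoots.1 hγ).1.1 with
  | pair hij' hj' hadd' hsame' =>
    rwa [← F.eq_of_pair_mem_linkedRoots hl hγ hij' hj' hadd' hsame' hβ]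
  | cross hi' hk' hadd' hsub' =>
    rwa [← F.eq_of_cross_mem_linkedRoots hl hγ hi' hk' hadd' hsub' hβ]
  | negates hi' h0' hn' =>
    have hlost := F.lostIndices_eq_of_mem_linkedRoots hβ hγ
    rw [F.lostIndices_of_negatesCoord hl hi h0 hn, F.lostIndices_of_negatesCoord hl hi' h0' hn',
      Set.singleton_eq_singleton_iff] at hlost
    rwa [hlost]

end Classification

section TailSigns

variable {E : Type*} [NormedAddCommGroup E] [InnerProductSpace ℝ E] {n : ℕ}
  {f : OrthonormalBasis (Fin n) ℝ E} {J : Finset (Fin n)} {i k z : Fin n} {ε : ℤˣ} {l : HStar E}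

lemma IsPosInt.add_self_of_smul {c : ℝ} (hc : c = 1 ∨ c = 2) {v : E} (h : IsPosInt (l (c • v))) :
    IsPosInt (l v + l v) := by
  rcases hc with rfl | rfl
  · rw [one_smul] at h
    exact IsPosInt.add h h
  · rwa [two_smul, map_add] at h

lemma IsPosInt.not_neg_of_smul {c : ℝ} (hc : c = 1 ∨ c = 2) {v w : E}
    (hv : IsPosInt (l v + l v)) (hw : IsPosInt (l (c • w))) : l v ≠ -l w := fun h => by
  have hsum := IsPosInt.ne_zero (IsPosInt.add hv (IsPosInt.add_self_of_smul hc hw))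
  exact hsum (by rw [h]; ring)

/-- In type `D` a zero coordinate in the tail makes the sign change of another tail coordinate an
element of `W_I`, of even length. -/
lemma sRefl_tail_of_coord_eq_zero (hi : ¬ InTail J i) (h0 : l (f i) ≠ 0) (hk : InTail J k)
    (hki : ε • l (f k) = l (f i)) (hz : InTail J z) (hz0 : l (f z) = 0) :
    k ≠ z ∧ sRefl (f i + ε • f k) l = sRefl (f k + f z) (sRefl (f k - f z) (sRefl (f i) l)) := by
  have hkz : k ≠ z := by
    rintro rfl
    exact h0 (by rw [← hki, hz0, smul_zero])
  have hzi : z ≠ i := fun h => hi (h ▸ hz)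
  refine ⟨hkz, ?_⟩
  rw [sRefl_add_smul_of_eq (fun h : i = k => hi (h ▸ hk)) hki, sRefl_basis_of_eq_zero hkz]
  rw [sRefl_basis_apply, if_neg hzi, hz0]

end TailSigns

section Vanishing

variable {n : ℕ} {S : RootSys V} {I : Finset V} {Φ' : Set V} {t : BCD}
  {f : OrthonormalBasis (Fin n) ℝ V} {J : Finset (Fin n)} {i j k z : Fin n} {ε : ℤˣ}
  {l m : HStar V} {β γ : V}

lemma NormalizedFrame.eq_one_of_tail (F : NormalizedFrame S I t f J) (hl : l ∈ LambdaP (I : Set V))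
    (ht : t ≠ .D) (hpos : IsPosInt (l (f i) + l (f i))) (hk : InTail J k)
    (h : ε • l (f k) = l (f i)) : ε = 1 :=
  (Int.units_eq_one_or ε).resolve_right fun hε =>
    IsPosInt.not_neg_of_smul (two_div_scale_eq t) hpos (F.isPosInt_smul hl ht hk)
      (by rw [← h, hε, Units.neg_smul, one_smul])

lemma NormalizedFrame.isPosInt_smul_of_negatesCoord (F : NormalizedFrame S I t f J)
    (hl : l ∈ LambdaP (I : Set V)) (hi : ¬ InTail J i) (h0 : l (f i) ≠ 0)
    (hβ : IsPosInt (l (coroot β))) (hn : NegatesCoord t f J l i β) :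
    IsPosInt (l ((2 / scale t) • f i)) := by
  cases hn with
  | short => rwa [coroot_smul_basis (scale_ne_zero t)] at hβ
  | @zero j hj hj0 =>
    have hij : i ≠ j := fun h => h0 (h ▸ hj0)
    have hcoroot := coroot_add_smul (f := f) hij 1
    rw [one_smul] at hcoroot
    rw [hcoroot, map_add, hj0, add_zero] at hβ
    rcases two_div_scale_eq t with h | h
    · rwa [h, one_smul]
    · rw [h, two_smul, map_add]
      exact IsPosInt.add hβ hβ
  | @tail k ε hk hki =>
    rw [coroot_add_smul (fun h : i = k => hi (h ▸ hk)), map_add, map_units_smul, hki] at hβ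
    by_cases ht : t = .D
    · rw [ht, scale, div_one, two_smul, map_add]
      exact hβ
    · obtain rfl := F.eq_one_of_tail hl ht hβ hk hki
      rw [map_smul, ← hki, one_smul, ← map_smul]
      exact F.isPosInt_smul hl ht hk

lemma NormalizedFrame.lt_of_coord_eq_zero (F : NormalizedFrame S I t f J)
    (hl : l ∈ LambdaP (I : Set V)) (hpos : IsPosInt (l (f i) + l (f i))) (hj : SameBlock J i j)
    (hj0 : l (f j) = 0) : i < j := by
  by_contra hij
  rcases (not_lt.1 hij).eq_or_lt with rfl | hji
  · exact IsPosInt.ne_zero hpos (by rw [hj0, add_zero])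
  · have hneg := F.isPosInt_sub hl hji hj.symm
    exact IsPosInt.ne_zero (IsPosInt.add hpos (IsPosInt.add hneg hneg)) (by rw [hj0]; ring)

lemma NormalizedFrame.isPosInt_of_coord_eq_zero (F : NormalizedFrame S I t f J)
    (hl : l ∈ LambdaP (I : Set V)) (hpos : IsPosInt (l (f i) + l (f i))) (hj : SameBlock J i j)
    (hj0 : l (f j) = 0) : IsPosInt (l (f i)) := by
  simpa [hj0] using F.isPosInt_sub hl (F.lt_of_coord_eq_zero hl hpos hj hj0) hj

lemma NormalizedFrame.add_smul_notMem_PhiI (F : NormalizedFrame S I t f J) (hi : ¬ InTail J i)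
    (hk : InTail J k) : f i + ε • f k ∉ PhiI S I := by
  have hik := hk.lt_of_not hi
  rcases Int.units_eq_one_or ε with rfl | rfl
  · rw [one_smul, F.add_mem_PhiI_iff hik]
    exact hi
  · rw [Units.neg_smul, one_smul, ← sub_eq_add_neg, F.sub_mem_PhiI_iff hik]
    exact fun h => hi (h.inTail_iff.2 hk)

lemma NormalizedFrame.mem_PsiP_of_negatesCoord (F : NormalizedFrame S I t f J)
    (hl : l ∈ LambdaP (I : Set V)) (hi : ¬ InTail J i)
    (hpos : IsPosInt (l ((2 / scale t) • f i))) (hn : NegatesCoord t f J l i γ) :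
    γ ∈ PsiP S (PhiI S I) (S.Φ : Set V) l := by
  have hpos2 := IsPosInt.add_self_of_smul (two_div_scale_eq t) hpos
  suffices γ ∈ S.pos ∧ γ ∉ PhiI S I ∧ IsPosInt (l (coroot γ)) from
    ⟨⟨S.pos_subset this.1, this.1⟩, this.2⟩
  cases hn with
  | short ht =>
    exact ⟨(F.mem_pos_iff _).2 (.inr ⟨ht, i, rfl⟩), (F.smul_mem_PhiI_iff ht).not.2 hi,
      by rwa [coroot_smul_basis (scale_ne_zero t)]⟩
  | @zero j hj hj0 =>
    have hij := F.lt_of_coord_eq_zero hl hpos2 hj hj0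
    have hcoroot := coroot_add_smul (f := f) hij.ne 1
    have hmem := F.add_smul_mem_pos hij 1
    rw [one_smul] at hcoroot hmem
    refine ⟨hmem, (F.add_mem_PhiI_iff hij).not.2 hi, ?_⟩
    rw [hcoroot, map_add, hj0, add_zero]
    exact F.isPosInt_of_coord_eq_zero hl hpos2 hj hj0
  | @tail k ε hk hki =>
    have hik := hk.lt_of_not hi
    refine ⟨F.add_smul_mem_pos hik ε, F.add_smul_notMem_PhiI hi hk, ?_⟩
    rwa [coroot_add_smul hik.ne, map_add, map_units_smul, hki]

lemma NormalizedFrame.weylNumerator_zero (F : NormalizedFrame S I t f J) (h0 : l (f i) ≠ 0)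
    (hj : SameBlock J i j) (hj0 : l (f j) = 0) :
    weylNumerator S (PhiI S I) (sRefl (f i + f j) l) =
      -weylNumerator S (PhiI S I) (sRefl (f i) l) := by
  have hij : i ≠ j := fun h => h0 (h ▸ hj0)
  rw [sRefl_add_of_eq_zero hij hj0, weylNumerator_sRefl isSubsystem_PhiI (F.sub_mem_PhiI hij hj)]

lemma NormalizedFrame.weylNumerator_tail (F : NormalizedFrame S I t f J) (hi : ¬ InTail J i)
    (ht : t ≠ .D) (hk : InTail J k) (hki : ε • l (f k) = l (f i)) :
    weylNumerator S (PhiI S I) (sRefl (f i + ε • f k) l) =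
      -weylNumerator S (PhiI S I) (sRefl (f i) l) := by
  rw [sRefl_add_smul_of_eq (fun h : i = k => hi (h ▸ hk)) hki,
    ← sRefl_smul_basis (scale_ne_zero t) k,
    weylNumerator_sRefl isSubsystem_PhiI ((F.smul_mem_PhiI_iff ht).2 hk)]

lemma NormalizedFrame.weylNumerator_tail_of_coord_eq_zero (F : NormalizedFrame S I t f J)
    (hi : ¬ InTail J i) (h0 : l (f i) ≠ 0) (hk : InTail J k) (hki : ε • l (f k) = l (f i))
    (hz : InTail J z) (hz0 : l (f z) = 0) :
    weylNumerator S (PhiI S I) (sRefl (f i + ε • f k) l) =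
      weylNumerator S (PhiI S I) (sRefl (f i) l) := by
  obtain ⟨hkz, h⟩ := sRefl_tail_of_coord_eq_zero hi h0 hk hki hz hz0
  rw [h, weylNumerator_sRefl isSubsystem_PhiI (F.add_mem_PhiI hkz hk hz),
    weylNumerator_sRefl isSubsystem_PhiI (F.sub_mem_PhiI hkz (hk.sameBlock hz)), neg_neg]

lemma NormalizedFrame.exists_wAct_of_negatesCoord (F : NormalizedFrame S I t f J)
    (hi : ¬ InTail J i) (h0 : l (f i) ≠ 0) (ht : t ≠ .D ∨ ∃ z, InTail J z ∧ l (f z) = 0)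
    (hn : NegatesCoord t f J l i γ) :
    ∃ u ∈ weyl (PhiI S I), sRefl γ l = wAct u (sRefl (f i) l) := by
  cases hn with
  | short => exact ⟨1, one_mem _, by rw [wAct_one, sRefl_smul_basis (scale_ne_zero t)]⟩
  | @zero j hj hj0 =>
    have hij : i ≠ j := fun h => h0 (h ▸ hj0)
    exact ⟨_, reflV_mem_weyl (F.sub_mem_PhiI hij hj),
      by rw [wAct_reflV, sRefl_add_of_eq_zero hij hj0]⟩
  | @tail k ε hk hki =>
    rcases ht with ht | ⟨z, hz, hz0⟩
    · refine ⟨_, reflV_mem_weyl ((F.smul_mem_PhiI_iff ht).2 hk), ?_⟩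
      rw [wAct_reflV, sRefl_smul_basis (scale_ne_zero t),
        sRefl_add_smul_of_eq (fun h : i = k => hi (h ▸ hk)) hki]
    · obtain ⟨hkz, h⟩ := sRefl_tail_of_coord_eq_zero hi h0 hk hki hz hz0
      exact ⟨_, mul_mem (reflV_mem_weyl (F.add_mem_PhiI hkz hk hz))
        (reflV_mem_weyl (F.sub_mem_PhiI hkz (hk.sameBlock hz))),
        by rw [wAct_mul, wAct_reflV, wAct_reflV, h]⟩

lemma NormalizedFrame.mem_linkedRoots_iff (F : NormalizedFrame S I t f J)
    (hl : l ∈ LambdaP (I : Set V)) (hβ : β ∈ linkedRoots S (PhiI S I) (S.Φ : Set V) l m)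
    (hi : ¬ InTail J i) (h0 : l (f i) ≠ 0) (hn : NegatesCoord t f J l i β)
    (ht : t ≠ .D ∨ ∃ z, InTail J z ∧ l (f z) = 0) :
    γ ∈ linkedRoots S (PhiI S I) (S.Φ : Set V) l m ↔ NegatesCoord t f J l i γ := by
  refine ⟨F.negatesCoord_of_mem_linkedRoots (F.isRegularOn hl) hβ hi h0 hn, fun hγ => ?_⟩
  obtain ⟨u, hu, hβu⟩ := F.exists_wAct_of_negatesCoord hi h0 ht hn
  obtain ⟨u', hu', hγu⟩ := F.exists_wAct_of_negatesCoord hi h0 ht hγ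
  have hpos := F.isPosInt_smul_of_negatesCoord hl hi h0 (mem_linkedRoots.1 hβ).1.1.2.2 hn
  refine mem_linkedRoots_of_wAct isSubsystem_PhiI hβ (F.mem_PsiP_of_negatesCoord hl hi hpos hγ)
    (mul_mem hu' (inv_mem hu)) ?_
  rw [hβu, ← wAct_mul, inv_mul_cancel_right, hγu]

end Vanishing

section ZeroAndTail

variable {E : Type*} [NormedAddCommGroup E] [InnerProductSpace ℝ E] {n : ℕ} {t : BCD}
  {f : OrthonormalBasis (Fin n) ℝ E} {J : Finset (Fin n)} {i : Fin n} {l : HStar E} {γ : E}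

/-- Some coordinate of `l` in the block of `i` vanishes. -/
def HasZero (f : OrthonormalBasis (Fin n) ℝ E) (J : Finset (Fin n)) (l : HStar E) (i : Fin n) :
    Prop :=
  ∃ j, SameBlock J i j ∧ l (f j) = 0

/-- Some coordinate of `l` in the tail equals its `i`-th coordinate up to sign. -/
def HasTail (f : OrthonormalBasis (Fin n) ℝ E) (J : Finset (Fin n)) (l : HStar E) (i : Fin n) :
    Prop :=
  ∃ k, InTail J k ∧ ∃ ε : ℤˣ, ε • l (f k) = l (f i)

lemma negatesCoord_iff_of_not_hasZero (hzero : ¬ HasZero f J l i) (htail : ¬ HasTail f J l i) :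
    NegatesCoord t f J l i γ ↔ t ≠ .D ∧ γ = scale t • f i := by
  constructor
  · rintro (ht | ⟨hz, hz0⟩ | ⟨hk, hki⟩)
    exacts [⟨ht, rfl⟩, (hzero ⟨_, hz, hz0⟩).elim, (htail ⟨_, hk, _, hki⟩).elim]
  · rintro ⟨ht, rfl⟩
    exact .short ht

end ZeroAndTail

section Cancellation

variable {n : ℕ} {S : RootSys V} {I : Finset V} {Φ' : Set V} {t : BCD}
  {f : OrthonormalBasis (Fin n) ℝ V} {J : Finset (Fin n)} {i j k z : Fin n} {ε : ℤˣ}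
  {l m : HStar V} {β γ : V}

lemma jc_ne_zero_of_forall_eq {R : Set V} (hR : IsSubsystem S R)
    (hβ : β ∈ linkedRoots S R Φ' l m) (h : ∀ γ ∈ linkedRoots S R Φ' l m, γ = β) :
    jc S R Φ' l m ≠ 0 := by
  rw [Ne, jc_eq_zero_iff_sum_inv hR, Finset.eq_singleton_iff_unique_mem.2 ⟨hβ, h⟩,
    Finset.sum_singleton]
  exact inv_ne_zero (weylNumerator_ne_zero (isRegularOn_of_mem_linkedRoots hβ))

lemma NormalizedFrame.zero_unique (F : NormalizedFrame S I t f J) (hl : IsRegularOn (PhiI S I) l)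
    (hj : SameBlock J i j) (hj0 : l (f j) = 0) (hk : SameBlock J i k) (hk0 : l (f k) = 0) :
    k = j :=
  F.eq_of_coord_eq hl (hk.symm.trans hj) (hk0.trans hj0.symm)

lemma NormalizedFrame.tail_unique (F : NormalizedFrame S I t f J) (hl : IsRegularOn (PhiI S I) l)
    (h0 : l (f i) ≠ 0) (hk : InTail J k) (hki : ε • l (f k) = l (f i)) {ε' : ℤˣ}
    (hz : InTail J z) (hzi : ε' • l (f z) = l (f i)) : z = k ∧ ε' = ε := by
  obtain rfl := F.eq_of_units_smul_coord_eq hl hz hk (hzi.trans hki.symm)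
  refine ⟨rfl, by_contra fun hne => h0 ?_⟩
  obtain rfl : ε' = -ε := Int.units_ne_iff_eq_neg.1 hne
  rw [Units.neg_smul, hki, neg_eq_self] at hzi
  exact hzi

lemma NormalizedFrame.negatesCoord_iff_of_hasZero (F : NormalizedFrame S I t f J)
    (hl : IsRegularOn (PhiI S I) l) (hj : SameBlock J i j) (hj0 : l (f j) = 0)
    (htail : ¬ HasTail f J l i) :
    NegatesCoord t f J l i γ ↔ t ≠ .D ∧ γ = scale t • f i ∨ γ = f i + f j := by
  constructor
  · rintro (ht | ⟨hz, hz0⟩ | ⟨hk, hki⟩)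
    · exact .inl ⟨ht, rfl⟩
    · rw [F.zero_unique hl hj hj0 hz hz0]
      exact .inr rfl
    · exact (htail ⟨_, hk, _, hki⟩).elim
  · rintro (⟨ht, rfl⟩ | rfl)
    exacts [.short ht, .zero hj hj0]

lemma NormalizedFrame.negatesCoord_iff_of_hasTail (F : NormalizedFrame S I t f J)
    (hl : IsRegularOn (PhiI S I) l) (h0 : l (f i) ≠ 0) (hk : InTail J k)
    (hki : ε • l (f k) = l (f i)) (hzero : ¬ HasZero f J l i) :
    NegatesCoord t f J l i γ ↔ t ≠ .D ∧ γ = scale t • f i ∨ γ = f i + ε • f k := by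
  constructor
  · rintro (ht | ⟨hz, hz0⟩ | ⟨hz, hzi⟩)
    · exact .inl ⟨ht, rfl⟩
    · exact (hzero ⟨_, hz, hz0⟩).elim
    · obtain ⟨rfl, rfl⟩ := F.tail_unique hl h0 hk hki hz hzi
      exact .inr rfl
  · rintro (⟨ht, rfl⟩ | rfl)
    exacts [.short ht, .tail hk hki]

lemma NormalizedFrame.negatesCoord_iff_of_hasZero_of_hasTail (F : NormalizedFrame S I t f J)
    (hl : IsRegularOn (PhiI S I) l) (h0 : l (f i) ≠ 0) (hj : SameBlock J i j)
    (hj0 : l (f j) = 0) (hk : InTail J k) (hki : ε • l (f k) = l (f i)) :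
    NegatesCoord t f J l i γ ↔
      t ≠ .D ∧ γ = scale t • f i ∨ γ = f i + f j ∨ γ = f i + ε • f k := by
  constructor
  · rintro (ht | ⟨hz, hz0⟩ | ⟨hz, hzi⟩)
    · exact .inl ⟨ht, rfl⟩
    · rw [F.zero_unique hl hj hj0 hz hz0]
      exact .inr (.inl rfl)
    · obtain ⟨rfl, rfl⟩ := F.tail_unique hl h0 hk hki hz hzi
      exact .inr (.inr rfl)
  · rintro (⟨ht, rfl⟩ | rfl | rfl)
    exacts [.short ht, .zero hj hj0, .tail hk hki]

lemma NormalizedFrame.jc_eq_zero_iff_card (F : NormalizedFrame S I t f J)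
    (hl : l ∈ LambdaP (I : Set V)) (hβ : β ∈ linkedRoots S (PhiI S I) (S.Φ : Set V) l m)
    (hi : ¬ InTail J i) (h0 : l (f i) ≠ 0) (hn : NegatesCoord t f J l i β) (ht : t ≠ .D) :
    jc S (PhiI S I) (S.Φ : Set V) l m = 0 ↔
      (linkedRoots S (PhiI S I) (S.Φ : Set V) l m).card = 2 := by
  set N := weylNumerator S (PhiI S I) (sRefl (f i) l)
  have mem_iff : ∀ {γ}, γ ∈ linkedRoots S (PhiI S I) (S.Φ : Set V) l m ↔
      NegatesCoord t f J l i γ := F.mem_linkedRoots_iff hl hβ hi h0 hn (.inl ht)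
  have hmem := mem_iff.2 (.short ht)
  have short_eq : weylNumerator S (PhiI S I) (sRefl (scale t • f i) l) = N := by
    rw [sRefl_smul_basis (scale_ne_zero t)]
  have hN0 : N ≠ 0 := short_eq ▸ weylNumerator_ne_zero (isRegularOn_of_mem_linkedRoots hmem)
  have others_eq : ∀ γ ∈ (linkedRoots S (PhiI S I) (S.Φ : Set V) l m).erase (scale t • f i),
      (weylNumerator S (PhiI S I) (sRefl γ l))⁻¹ = -N⁻¹ := fun γ hγ => by
    obtain ⟨hne, hγ⟩ := Finset.mem_erase.1 hγ
    cases mem_iff.1 hγ with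
    | short => exact (hne rfl).elim
    | zero hj hj0 => rw [F.weylNumerator_zero h0 hj hj0, inv_neg]
    | tail hk hki => rw [F.weylNumerator_tail hi ht hk hki, inv_neg]
  rw [jc_eq_zero_iff_sum_inv isSubsystem_PhiI, ← Finset.add_sum_erase _ _ hmem,
    Finset.sum_congr rfl others_eq, short_eq, Finset.sum_const, smul_neg, add_neg_eq_zero,
    ← Finset.card_erase_add_one hmem, nsmul_eq_mul, right_eq_mul₀ (inv_ne_zero hN0),
    Nat.cast_eq_one]
  omega

lemma NormalizedFrame.jc_eq_zero_iff_not_iff (F : NormalizedFrame S I t f J)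
    (hl : l ∈ LambdaP (I : Set V)) (hβ : β ∈ linkedRoots S (PhiI S I) (S.Φ : Set V) l m)
    (hi : ¬ InTail J i) (h0 : l (f i) ≠ 0) (hn : NegatesCoord t f J l i β) (ht : t ≠ .D) :
    jc S (PhiI S I) (S.Φ : Set V) l m = 0 ↔ ¬ (HasZero f J l i ↔ HasTail f J l i) := by
  have hreg := F.isRegularOn hl
  have eq_of_iff : ∀ A : Finset V, (∀ γ, NegatesCoord t f J l i γ ↔ γ ∈ A) →
      linkedRoots S (PhiI S I) (S.Φ : Set V) l m = A := fun A hA => by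
    ext γ
    rw [F.mem_linkedRoots_iff hl hβ hi h0 hn (.inl ht), hA]
  have ne_tail : ∀ {k} {ε : ℤˣ}, InTail J k → scale t • f i ≠ f i + ε • f k := fun {k} _ hk =>
    smul_ne_add_smul (fun h : i = k => hi (h ▸ hk)) _
  have ne_zero : ∀ {j}, l (f j) = 0 → scale t • f i ≠ f i + f j := fun {j} hj0 => by
    simpa using smul_ne_add_smul (f := f) (ε := 1) (fun h : i = j => h0 (h ▸ hj0)) (scale t)
  rw [F.jc_eq_zero_iff_card hl hβ hi h0 hn ht]
  by_cases hzero : HasZero f J l i <;> by_cases htail : HasTail f J l i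
  · obtain ⟨j, hj, hj0⟩ := id hzero
    obtain ⟨k, hk, ε, hki⟩ := id htail
    have hjk : j ≠ k := fun h => hi (hj.inTail_iff.2 (h ▸ hk))
    rw [eq_of_iff {scale t • f i, f i + f j, f i + ε • f k} fun γ => by
      simp [F.negatesCoord_iff_of_hasZero_of_hasTail hreg h0 hj hj0 hk hki, ht]]
    simp [hzero, htail, ne_zero hj0, ne_tail hk, add_ne_add_smul hjk]
  · obtain ⟨j, hj, hj0⟩ := id hzero
    rw [eq_of_iff {scale t • f i, f i + f j} fun γ => by
      simp [F.negatesCoord_iff_of_hasZero hreg hj hj0 htail, ht]]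
    simp [hzero, htail, ne_zero hj0]
  · obtain ⟨k, hk, ε, hki⟩ := id htail
    rw [eq_of_iff {scale t • f i, f i + ε • f k} fun γ => by
      simp [F.negatesCoord_iff_of_hasTail hreg h0 hk hki hzero, ht]]
    simp [hzero, htail, ne_tail hk]
  · rw [eq_of_iff {scale t • f i} fun γ => by
      simp [negatesCoord_iff_of_not_hasZero hzero htail, ht]]
    simp [hzero, htail]

lemma NormalizedFrame.jc_eq_zero_of_exists_tail_eq_zero (F : NormalizedFrame S I .D f J)
    (hl : l ∈ LambdaP (I : Set V)) (hβ : β ∈ linkedRoots S (PhiI S I) (S.Φ : Set V) l m)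
    (hi : ¬ InTail J i) (h0 : l (f i) ≠ 0) (hn : NegatesCoord .D f J l i β)
    (hzero : HasZero f J l i) (htail : HasTail f J l i) (hz : InTail J z) (hz0 : l (f z) = 0) :
    jc S (PhiI S I) (S.Φ : Set V) l m = 0 := by
  obtain ⟨j, hj, hj0⟩ := hzero
  obtain ⟨k, hk, ε, hki⟩ := htail
  have hjk : j ≠ k := fun h => hi (hj.inTail_iff.2 (h ▸ hk))
  have linkedRoots_eq : linkedRoots S (PhiI S I) (S.Φ : Set V) l m =
      {f i + f j, f i + ε • f k} := by
    ext γ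
    simp [F.mem_linkedRoots_iff hl hβ hi h0 hn (.inr ⟨z, hz, hz0⟩),
      F.negatesCoord_iff_of_hasZero_of_hasTail (F.isRegularOn hl) h0 hj hj0 hk hki]
  rw [jc_eq_zero_iff_sum_inv isSubsystem_PhiI, linkedRoots_eq,
    Finset.sum_pair (add_ne_add_smul hjk), F.weylNumerator_zero h0 hj hj0,
    F.weylNumerator_tail_of_coord_eq_zero hi h0 hk hki hz hz0, inv_neg, neg_add_cancel]

lemma NormalizedFrame.exists_tail_eq_zero_of_mem_linkedRoots (F : NormalizedFrame S I .D f J)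
    (hi : ¬ InTail J i) (h0 : l (f i) ≠ 0) (hj : SameBlock J i j) (hj0 : l (f j) = 0)
    (hk : InTail J k) (hki : ε • l (f k) = l (f i))
    (hmem : f i + f j ∈ linkedRoots S (PhiI S I) Φ' l m)
    (hmem' : f i + ε • f k ∈ linkedRoots S (PhiI S I) Φ' l m) :
    ∃ z, InTail J z ∧ l (f z) = 0 := by
  have hij : i ≠ j := fun h => h0 (h ▸ hj0)
  have hik : i ≠ k := fun h => hi (h ▸ hk)
  have ne_of_tail : ∀ {z}, InTail J z → z ≠ i ∧ z ≠ j := fun hz =>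
    ⟨fun h => hi (h ▸ hz), fun h => hi (hj.inTail_iff.2 (h ▸ hz))⟩
  have apply_zero : ∀ z, InTail J z → sRefl (f i + f j) l (f z) = l (f z) := fun z hz => by
    rw [sRefl_add_apply hij, if_neg (ne_of_tail hz).1, if_neg (ne_of_tail hz).2]
  obtain ⟨w, hw, h⟩ := exists_wAct_of_mem_linkedRoots hmem hmem'
  obtain ⟨z, hz, hz0⟩ := F.exists_tail_coord_eq_zero hw h hk
    (by rw [apply_zero k hk, sRefl_add_smul_apply hik, if_neg (ne_of_tail hk).1, if_pos rfl, ← hki,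
      smul_smul, Int.units_mul_self, one_smul])
    fun z hz hzk => by
      rw [apply_zero z hz, sRefl_add_smul_apply hik, if_neg (ne_of_tail hz).1, if_neg hzk]
  exact ⟨z, hz, by rwa [apply_zero z hz] at hz0⟩

lemma NormalizedFrame.jc_eq_zero_iff_of_type_D (F : NormalizedFrame S I .D f J)
    (hl : l ∈ LambdaP (I : Set V)) (hβ : β ∈ linkedRoots S (PhiI S I) (S.Φ : Set V) l m)
    (hi : ¬ InTail J i) (h0 : l (f i) ≠ 0) (hn : NegatesCoord .D f J l i β) :
    jc S (PhiI S I) (S.Φ : Set V) l m = 0 ↔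
      HasZero f J l i ∧ HasTail f J l i ∧ ∃ z, InTail J z ∧ l (f z) = 0 := by
  have hreg := F.isRegularOn hl
  refine ⟨fun h => ?_, fun ⟨hzero, htail, z, hz, hz0⟩ =>
    F.jc_eq_zero_of_exists_tail_eq_zero hl hβ hi h0 hn hzero htail hz hz0⟩
  obtain ⟨γ, hγ, hne⟩ : ∃ γ ∈ linkedRoots S (PhiI S I) (S.Φ : Set V) l m, γ ≠ β := by
    by_contra! hall
    exact jc_ne_zero_of_forall_eq isSubsystem_PhiI hβ hall h
  cases hn with
  | short ht => exact (ht rfl).elim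
  | @zero j hj hj0 =>
    cases F.negatesCoord_of_mem_linkedRoots hreg hβ hi h0 (.zero hj hj0) hγ with
    | short ht => exact (ht rfl).elim
    | zero hj' hj0' => exact (hne (by rw [F.zero_unique hreg hj hj0 hj' hj0'])).elim
    | tail hk hki => exact ⟨⟨_, hj, hj0⟩, ⟨_, hk, _, hki⟩,
        F.exists_tail_eq_zero_of_mem_linkedRoots hi h0 hj hj0 hk hki hβ hγ⟩
  | @tail k ε hk hki =>
    cases F.negatesCoord_of_mem_linkedRoots hreg hβ hi h0 (.tail hk hki) hγ with
    | short ht => exact (ht rfl).elim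
    | zero hj hj0 => exact ⟨⟨_, hj, hj0⟩, ⟨_, hk, _, hki⟩,
        F.exists_tail_eq_zero_of_mem_linkedRoots hi h0 hj hj0 hk hki hγ hβ⟩
    | tail hk' hki' =>
      obtain ⟨rfl, rfl⟩ := F.tail_unique hreg h0 hk hki hk' hki'
      exact (hne rfl).elim

end Cancellation

section Conditions

variable {E : Type*} [NormedAddCommGroup E] [InnerProductSpace ℝ E] {n : ℕ}

/-- Condition (i) of the theorem, in coordinates with respect to `f`. -/
def TailCase (t : BCD) (f : OrthonormalBasis (Fin n) ℝ E) (J : Finset (Fin n)) (l : HStar E)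
    (β : E) : Prop :=
  t ≠ .D ∧ ∃ i j, ¬ InTail J i ∧ InTail J j ∧ (β = scale t • f i ∨ β = f i + f j) ∧
    IsPosInt (l ((2 / scale t) • f i)) ∧ l (f j) = l (f i) ∧
    ∀ k, SameBlock J i k → l (f k) ≠ 0 ∧ l (f k) ≠ -l (f i)

/-- Condition (ii) of the theorem, in coordinates with respect to `f`. -/
def ZeroCase (t : BCD) (f : OrthonormalBasis (Fin n) ℝ E) (J : Finset (Fin n)) (l : HStar E)
    (β : E) : Prop :=
  t ≠ .D ∧ ∃ i j, ¬ InTail J i ∧ i < j ∧ SameBlock J i j ∧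
    (β = scale t • f i ∨ β = f i + f j) ∧ IsPosInt (l (f i)) ∧ l (f j) = 0 ∧
    (∀ k, SameBlock J i k → l (f k) ≠ -l (f i)) ∧ ∀ k, InTail J k → l (f k) ≠ l (f i)

/-- Condition (iii) of the theorem, in coordinates with respect to `f`. -/
def ZeroTailCase (t : BCD) (f : OrthonormalBasis (Fin n) ℝ E) (J : Finset (Fin n)) (l : HStar E)
    (β : E) : Prop :=
  t = .D ∧ ∃ i j k z, ¬ InTail J i ∧ i < j ∧ SameBlock J i j ∧ InTail J k ∧ k < z ∧
    z.1 + 1 = n ∧ (β = f i + f j ∨ β = f i + f k) ∧ l (f k) = l (f i) ∧ IsPosInt (l (f i)) ∧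
    l (f j) = 0 ∧ l (f z) = 0 ∧ ∀ k, SameBlock J i k → l (f k) ≠ -l (f i)

end Conditions

section Cases

variable {n : ℕ} {S : RootSys V} {I : Finset V} {t : BCD} {f : OrthonormalBasis (Fin n) ℝ V}
  {J : Finset (Fin n)} {i j k z : Fin n} {ε : ℤˣ} {l m : HStar V} {β : V}

lemma NormalizedFrame.coord_ne_neg_of_negatesCoord (F : NormalizedFrame S I t f J)
    (hreg : IsRegularOn (PhiI S I) (sRefl β l)) (hi : ¬ InTail J i) (h0 : l (f i) ≠ 0)
    (hn : NegatesCoord t f J l i β) (hk : SameBlock J i k) : l (f k) ≠ -l (f i) := fun h => by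
  have hki : k ≠ i := fun hki => h0 (self_eq_neg.1 (hki ▸ h))
  cases hn with
  | short =>
    rw [sRefl_smul_basis (scale_ne_zero t)] at hreg
    refine hki (F.eq_of_coord_eq hreg hk ?_).symm
    rw [sRefl_basis_apply, sRefl_basis_apply, if_pos rfl, if_neg hki, h]
  | @zero j hj hj0 =>
    have hij : i ≠ j := fun h => h0 (h ▸ hj0)
    have hkj : k ≠ j := fun hkj => h0 (neg_eq_zero.1 (by rw [← h, hkj, hj0]))
    refine hkj (F.eq_of_coord_eq hreg (hj.symm.trans hk) ?_).symm
    rw [sRefl_add_apply hij, sRefl_add_apply hij, if_neg hij.symm, if_pos rfl, if_neg hki,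
      if_neg hkj, h]
  | @tail z ε hz hzi =>
    have hiz : i ≠ z := fun h => hi (h ▸ hz)
    have hkz : k ≠ z := fun h => hi (hk.inTail_iff.2 (h ▸ hz))
    refine hki (F.eq_of_coord_eq hreg hk ?_).symm
    rw [sRefl_add_smul_apply hiz, sRefl_add_smul_apply hiz, if_pos rfl, hzi, if_neg hki,
      if_neg hkz, h]

lemma NormalizedFrame.add_one_eq_of_tail_eq_zero (F : NormalizedFrame S I t f J)
    (hl : l ∈ LambdaP (I : Set V)) (hz : InTail J z) (hz0 : l (f z) = 0) : z.1 + 1 = n := by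
  by_contra hne
  let last : Fin n := ⟨n - 1, Nat.sub_one_lt_of_lt z.isLt⟩
  have hlt : z < last := Fin.lt_def.2 (show z.1 < n - 1 by omega)
  have hsub := F.isPosInt_sub hl hlt (hz.sameBlock (hz.mono hlt.le))
  have hadd := F.isPosInt_add hl hlt hz
  exact IsPosInt.ne_zero (IsPosInt.add hsub hadd) (by rw [hz0]; ring)

lemma NormalizedFrame.eq_one_of_tail_of_lt (F : NormalizedFrame S I t f J)
    (hl : l ∈ LambdaP (I : Set V)) (hpos : IsPosInt (l (f i) + l (f i))) (hk : InTail J k)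
    (hki : ε • l (f k) = l (f i)) (hkz : k < z) (hz0 : l (f z) = 0) : ε = 1 := by
  refine (Int.units_eq_one_or ε).resolve_right fun hε => ?_
  have hk1 := F.isPosInt_sub hl hkz (hk.sameBlock (hk.mono hkz.le))
  rw [hz0, sub_zero, ← one_smul ℝ (f k)] at hk1
  exact IsPosInt.not_neg_of_smul (.inl rfl) hpos hk1
    (by rw [← hki, hε, Units.neg_smul, one_smul])

lemma NormalizedFrame.cases_of_not_iff (F : NormalizedFrame S I t f J)
    (hl : l ∈ LambdaP (I : Set V)) (ht : t ≠ .D) (hi : ¬ InTail J i)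
    (hpos : IsPosInt (l ((2 / scale t) • f i))) (hn : NegatesCoord t f J l i β)
    (hne : ∀ k, SameBlock J i k → l (f k) ≠ -l (f i))
    (h : ¬ (HasZero f J l i ↔ HasTail f J l i)) : TailCase t f J l β ∨ ZeroCase t f J l β := by
  have hreg := F.isRegularOn hl
  have hpos2 := IsPosInt.add_self_of_smul (two_div_scale_eq t) hpos
  have h0 : l (f i) ≠ 0 := fun h => IsPosInt.ne_zero hpos2 (by rw [h, add_zero])
  rcases (xor_iff_not_iff _ _).2 h with ⟨hzero, htail⟩ | ⟨htail, hzero⟩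
  · obtain ⟨j, hj, hj0⟩ := id hzero
    refine .inr ⟨ht, i, j, hi, F.lt_of_coord_eq_zero hl hpos2 hj hj0, hj, ?_,
      F.isPosInt_of_coord_eq_zero hl hpos2 hj hj0, hj0, hne,
      fun k hk hki => htail ⟨k, hk, 1, by rwa [one_smul]⟩⟩
    simpa [ht] using (F.negatesCoord_iff_of_hasZero hreg hj hj0 htail).1 hn
  · obtain ⟨k, hk, ε, hki⟩ := id htail
    obtain rfl := F.eq_one_of_tail hl ht hpos2 hk hki
    refine .inl ⟨ht, i, k, hi, hk, ?_, hpos, by rwa [one_smul] at hki,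
      fun z hz => ⟨fun hz0 => hzero ⟨z, hz, hz0⟩, hne z hz⟩⟩
    simpa [ht] using (F.negatesCoord_iff_of_hasTail hreg h0 hk hki hzero).1 hn

lemma NormalizedFrame.zeroTailCase (F : NormalizedFrame S I .D f J)
    (hl : l ∈ LambdaP (I : Set V)) (hi : ¬ InTail J i)
    (hpos : IsPosInt (l (f i) + l (f i))) (hn : NegatesCoord .D f J l i β)
    (hne : ∀ k, SameBlock J i k → l (f k) ≠ -l (f i)) (hzero : HasZero f J l i)
    (htail : HasTail f J l i) (hz : InTail J z) (hz0 : l (f z) = 0) :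
    ZeroTailCase .D f J l β := by
  have h0 : l (f i) ≠ 0 := fun h => IsPosInt.ne_zero hpos (by rw [h, add_zero])
  obtain ⟨j, hj, hj0⟩ := hzero
  obtain ⟨k, hk, ε, hki⟩ := htail
  have hlast := F.add_one_eq_of_tail_eq_zero hl hz hz0
  have hkz : k < z := by
    refine lt_of_le_of_ne (Fin.le_def.2 (by omega)) fun h => h0 ?_
    rw [← hki, h, hz0, smul_zero]
  obtain rfl := F.eq_one_of_tail_of_lt hl hpos hk hki hkz hz0
  refine ⟨rfl, i, j, k, z, hi, F.lt_of_coord_eq_zero hl hpos hj hj0, hj, hk, hkz, hlast, ?_,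
    by rwa [one_smul] at hki, F.isPosInt_of_coord_eq_zero hl hpos hj hj0, hj0, hz0, hne⟩
  simpa using
    (F.negatesCoord_iff_of_hasZero_of_hasTail (F.isRegularOn hl) h0 hj hj0 hk hki).1 hn

lemma NormalizedFrame.jc_eq_zero_of_tailCase (F : NormalizedFrame S I t f J)
    (hl : l ∈ LambdaP (I : Set V)) (hβ : β ∈ linkedRoots S (PhiI S I) (S.Φ : Set V) l m)
    (h : TailCase t f J l β) : jc S (PhiI S I) (S.Φ : Set V) l m = 0 := by
  obtain ⟨ht, i, j, hi, hj, hβ', -, hij, hk⟩ := h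
  have hji : (1 : ℤˣ) • l (f j) = l (f i) := by rwa [one_smul]
  have hn : NegatesCoord t f J l i β := by
    rcases hβ' with rfl | rfl
    exacts [.short ht, by simpa using NegatesCoord.tail hj hji]
  have htail : HasTail f J l i := ⟨j, hj, 1, hji⟩
  have hzero : ¬ HasZero f J l i := fun ⟨k, hik, hk0⟩ => (hk k hik).1 hk0
  simp [F.jc_eq_zero_iff_not_iff hl hβ hi (hk i (.refl i)).1 hn ht, htail, hzero]

lemma NormalizedFrame.jc_eq_zero_of_zeroCase (F : NormalizedFrame S I t f J)
    (hl : l ∈ LambdaP (I : Set V)) (hβ : β ∈ linkedRoots S (PhiI S I) (S.Φ : Set V) l m)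
    (h : ZeroCase t f J l β) : jc S (PhiI S I) (S.Φ : Set V) l m = 0 := by
  obtain ⟨ht, i, j, hi, -, hj, hβ', hpos, hj0, -, hk⟩ := h
  have hn : NegatesCoord t f J l i β := by
    rcases hβ' with rfl | rfl
    exacts [.short ht, .zero hj hj0]
  have hzero : HasZero f J l i := ⟨j, hj, hj0⟩
  have htail : ¬ HasTail f J l i := fun ⟨k, hkt, ε, hki⟩ => by
    obtain rfl := F.eq_one_of_tail hl ht (IsPosInt.add hpos hpos) hkt hki
    exact hk k hkt (by rwa [one_smul] at hki)
  simp [F.jc_eq_zero_iff_not_iff hl hβ hi (IsPosInt.ne_zero hpos) hn ht, htail, hzero]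

lemma NormalizedFrame.jc_eq_zero_of_zeroTailCase (F : NormalizedFrame S I t f J)
    (hl : l ∈ LambdaP (I : Set V)) (hβ : β ∈ linkedRoots S (PhiI S I) (S.Φ : Set V) l m)
    (h : ZeroTailCase t f J l β) : jc S (PhiI S I) (S.Φ : Set V) l m = 0 := by
  obtain ⟨rfl, i, j, k, z, hi, -, hj, hk, hkz, -, hβ', hik, hpos, hj0, hz0, -⟩ := h
  have hki : (1 : ℤˣ) • l (f k) = l (f i) := by rwa [one_smul]
  have hn : NegatesCoord .D f J l i β := by
    rcases hβ' with rfl | rfl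
    exacts [.zero hj hj0, by simpa using NegatesCoord.tail hk hki]
  exact F.jc_eq_zero_of_exists_tail_eq_zero hl hβ hi (IsPosInt.ne_zero hpos) hn ⟨j, hj, hj0⟩
    ⟨k, hk, 1, hki⟩ (hk.mono hkz.le) hz0

theorem NormalizedFrame.jc_eq_zero_iff (F : NormalizedFrame S I t f J)
    (hl : l ∈ LambdaP (I : Set V)) (hβ : β ∈ linkedRoots S (PhiI S I) (S.Φ : Set V) l m) :
    jc S (PhiI S I) (S.Φ : Set V) l m = 0 ↔
      TailCase t f J l β ∨ ZeroCase t f J l β ∨ ZeroTailCase t f J l β := by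
  refine ⟨fun h => ?_, ?_⟩
  · obtain hunique | ⟨i, hi, h0, hn⟩ := F.eq_or_negatesCoord (F.isRegularOn hl) hβ
    · exact (jc_ne_zero_of_forall_eq isSubsystem_PhiI hβ hunique h).elim
    have hpos := F.isPosInt_smul_of_negatesCoord hl hi h0 (mem_linkedRoots.1 hβ).1.1.2.2 hn
    have hne : ∀ k, SameBlock J i k → l (f k) ≠ -l (f i) := fun k =>
      F.coord_ne_neg_of_negatesCoord (isRegularOn_of_mem_linkedRoots hβ) hi h0 hn
    by_cases ht : t = .D
    · subst ht
      obtain ⟨hzero, htail, z, hz, hz0⟩ := (F.jc_eq_zero_iff_of_type_D hl hβ hi h0 hn).1 h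
      exact .inr (.inr (F.zeroTailCase hl hi
        (IsPosInt.add_self_of_smul (two_div_scale_eq .D) hpos) hn hne hzero htail hz hz0))
    · rw [F.jc_eq_zero_iff_not_iff hl hβ hi h0 hn ht] at h
      exact (F.cases_of_not_iff hl ht hi hpos hn hne h).imp_right .inl
  · rintro (h | h | h)
    exacts [F.jc_eq_zero_of_tailCase hl hβ h, F.jc_eq_zero_of_zeroCase hl hβ h,
      F.jc_eq_zero_of_zeroTailCase hl hβ h]

end Cases

section Flip

variable {E : Type*} [NormedAddCommGroup E] [InnerProductSpace ℝ E] {n : ℕ}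
  {f : OrthonormalBasis (Fin n) ℝ E} {p z i k : Fin n}

/-- The orthonormal basis `f` with `f z` replaced by `-f z`. -/
def negBasis (f : OrthonormalBasis (Fin n) ℝ E) (z : Fin n) : OrthonormalBasis (Fin n) ℝ E :=
  f.map (ℝ ∙ f z)ᗮ.reflection

lemma negBasis_self (z : Fin n) : negBasis f z z = -f z := by
  rw [negBasis, OrthonormalBasis.map_apply,
    Submodule.reflection_orthogonalComplement_singleton_eq_neg]

lemma negBasis_of_ne (h : k ≠ z) : negBasis f z k = f k := by
  rw [negBasis, OrthonormalBasis.map_apply]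
  refine Submodule.reflection_mem_subspace_eq_self
    (Submodule.mem_orthogonal_singleton_iff_inner_right.2 ?_)
  rw [OrthonormalBasis.inner_eq_ite, if_neg h.symm]

lemma negBasis_eq_smul (z k : Fin n) :
    negBasis f z k = (if k = z then -1 else 1 : ℤˣ) • f k := by
  split_ifs with h
  · simp [h, negBasis_self]
  · simp [negBasis_of_ne h]

lemma simpleRoot_negBasis (hp : p.1 + 2 = n) (hz : z.1 + 1 = n) (c : ℝ) (k : Fin n) :
    simpleRoot .D c (negBasis f z) k = simpleRoot .D c f (Equiv.swap p z k) := by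
  have hpz : p ≠ z := fun h => by omega
  rcases eq_or_ne k p with rfl | hkp
  · have hk : (⟨k + 1, by omega⟩ : Fin n) = z := Fin.ext (by simp only; omega)
    have hz' : (⟨z - 1, by omega⟩ : Fin n) = k := Fin.ext (by simp only; omega)
    simp [simpleRoot_of_lt (k := k) (by omega), simpleRoot_last hz, hk, hz', negBasis_self,
      negBasis_of_ne hpz]
  rcases eq_or_ne k z with rfl | hkz
  · have hp' : (⟨p + 1, by omega⟩ : Fin n) = k := Fin.ext (by simp only; omega)
    have hk : (⟨k - 1, by omega⟩ : Fin n) = p := Fin.ext (by simp only; omega)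
    simp [simpleRoot_of_lt (k := p) (by omega), simpleRoot_last hz, hk, hp', negBasis_self,
      negBasis_of_ne hpz, sub_eq_add_neg]
  · rw [ne_eq, Fin.ext_iff] at hkp hkz
    have hkz' : (⟨k + 1, by omega⟩ : Fin n) ≠ z := by
      rw [ne_eq, Fin.ext_iff]
      simp only
      omega
    rw [Equiv.swap_apply_of_ne_of_ne (by omega) (by omega), simpleRoot_of_lt (by omega),
      simpleRoot_of_lt (by omega), negBasis_of_ne (by omega), negBasis_of_ne hkz']

end Flip

section General

variable {n : ℕ} {S : RootSys V} {I : Finset V} {t : BCD} {f : OrthonormalBasis (Fin n) ℝ V}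
  {J : Finset (Fin n)} {p z : Fin n} {l m : HStar V} {β : V}

-- Negating `e_n` is the diagram automorphism of `D_n`, which swaps the last two simple roots.
lemma ClassicalFrame.flip (F : ClassicalFrame S I .D f J) (hpn : p.1 + 2 = n) (hz : z ∉ J)
    (hzn : z.1 + 1 = n) :
    NormalizedFrame S I .D (negBasis f z) (J.map (Equiv.swap p z).toEmbedding) where
  mem_pos_iff v := by
    rw [F.mem_pos_iff]
    refine or_congr (exists₂_congr fun i j => and_congr_right fun hij => ?_) (by simp)
    have hiz : i ≠ z := fun h => by omega
    let δ : ℤˣ := if j = z then -1 else 1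
    have hδ (ε : ℤˣ) : negBasis f z i + ε • negBasis f z j = f i + (ε * δ) • f j := by
      rw [negBasis_of_ne hiz, negBasis_eq_smul, mul_smul]
    refine ⟨fun ⟨ε, h⟩ => ⟨ε * δ, ?_⟩, fun ⟨ε, h⟩ => ⟨ε * δ, (hδ ε).symm ▸ h⟩⟩
    rw [hδ, mul_assoc, Int.units_mul_self, mul_one, h]
  mem_I_iff v := by
    rw [F.mem_I_iff, (Equiv.swap p z).exists_congr_left]
    simp only [simpleRoot_negBasis hpn hzn, Finset.mem_map_equiv, Equiv.symm_swap]
  two_le := F.two_le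
  last_mem _ c hc hcn := by
    have hcp : c = p := Fin.ext (by omega)
    rw [hcp, Finset.mem_map_equiv, Equiv.symm_swap, Equiv.swap_apply_left] at hc
    exact (hz hc).elim

lemma NormalizedFrame.jc_ne_zero_of_forall_not_inTail (F : NormalizedFrame S I .D f J)
    (hl : l ∈ LambdaP (I : Set V)) (hβ : β ∈ linkedRoots S (PhiI S I) (S.Φ : Set V) l m)
    (hJ : ∀ k, ¬ InTail J k) : jc S (PhiI S I) (S.Φ : Set V) l m ≠ 0 := fun h => by
  rcases (F.jc_eq_zero_iff hl hβ).1 h with ⟨ht, -⟩ | ⟨ht, -⟩ | ⟨-, i, j, k, z, -, -, -, hk, -⟩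
  exacts [ht rfl, ht rfl, hJ k hk]

theorem statement_17_general (F : ClassicalFrame S I t f J) (hl : l ∈ LambdaP (I : Set V))
    (hβ : β ∈ linkedRoots S (PhiI S I) (S.Φ : Set V) l m) :
    jc S (PhiI S I) (S.Φ : Set V) l m = 0 ↔
      TailCase t f J l β ∨ ZeroCase t f J l β ∨ ZeroTailCase t f J l β := by
  by_cases hJ : t = .D → ∀ c ∈ J, c.1 + 2 = n → ∀ k : Fin n, k.1 + 1 = n → k ∈ J
  · exact NormalizedFrame.jc_eq_zero_iff ⟨F, hJ⟩ hl hβ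
  push Not at hJ
  obtain ⟨rfl, p, hp, hpn, z, hzn, hz⟩ := hJ
  have hz' : z ∈ J.map (Equiv.swap p z).toEmbedding := by simpa [Finset.mem_map_equiv] using hp
  refine iff_of_false ((F.flip hpn hz hzn).jc_ne_zero_of_forall_not_inTail hl hβ
    fun k hk => ?_) ?_
  · have := Fin.lt_def.1 (hk z hz')
    omega
  · rintro (⟨ht, -⟩ | ⟨ht, -⟩ | ⟨-, i, j, k, z', -, -, -, hk, hkz, -⟩)
    · exact ht rfl
    · exact ht rfl
    · have := Fin.lt_def.1 (hk p hp)
      have := Fin.lt_def.1 hkz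
      omega

end General

section Cuts

variable {n m s : ℕ} {q : ℕ → ℕ} {i k : Fin n}

/-- The chain `0 = q_0 < q_1 < ⋯ < q_{m-1} ≤ n` of cuts. -/
structure IsCutSequence (n m : ℕ) (q : ℕ → ℕ) : Prop where
  zero : q 0 = 0
  lt : ∀ s, 1 ≤ s → s ≤ m - 1 → q (s - 1) < q s
  le : q (m - 1) ≤ n

/-- The positions `q_1, …, q_{m-1}`, shifted to indices counted from `0`. -/
def cutSet (n m : ℕ) (q : ℕ → ℕ) : Finset (Fin n) :=
  {c | ∃ s, 1 ≤ s ∧ s ≤ m - 1 ∧ q s = c + 1}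

lemma mem_cutSet {c : Fin n} : c ∈ cutSet n m q ↔ ∃ s, 1 ≤ s ∧ s ≤ m - 1 ∧ q s = c + 1 := by
  simp [cutSet]

lemma IsCutSequence.le_of_le (C : IsCutSequence n m q) {r : ℕ} (hrs : r ≤ s) (hs : s ≤ m - 1) :
    q r ≤ q s := by
  induction s, hrs using Nat.le_induction with
  | base => rfl
  | succ s _ ih => exact (ih (by omega)).trans (C.lt (s + 1) (by omega) hs).le

lemma IsCutSequence.exists_mem_cutSet (C : IsCutSequence n m q) (h1 : 1 ≤ s) (hs : s ≤ m - 1) :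
    ∃ c ∈ cutSet n m q, c.1 + 1 = q s := by
  have hpos := C.lt s h1 hs
  have hle := (C.le_of_le hs le_rfl).trans C.le
  exact ⟨⟨q s - 1, by omega⟩, mem_cutSet.2 ⟨s, h1, hs, by simp only; omega⟩, by simp only; omega⟩

lemma IsCutSequence.inTail_iff (C : IsCutSequence n m q) :
    InTail (cutSet n m q) k ↔ q (m - 1) < k + 1 := by
  refine ⟨fun h => ?_, fun h c hc => ?_⟩
  · rcases Nat.eq_zero_or_pos (m - 1) with hm | hm
    · rw [hm, C.zero]
      omega
    · obtain ⟨c, hc, hcq⟩ := C.exists_mem_cutSet hm le_rfl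
      have := Fin.lt_def.1 (h c hc)
      omega
  · obtain ⟨s, -, hs, hcs⟩ := mem_cutSet.1 hc
    have := C.le_of_le hs le_rfl
    exact Fin.lt_def.2 (by omega)

lemma IsCutSequence.sameBlock_iff (C : IsCutSequence n m q) (h1 : 1 ≤ s) (hs : s < m)
    (hi : q (s - 1) < i + 1) (his : i + 1 ≤ q s) :
    SameBlock (cutSet n m q) i k ↔ q (s - 1) < k + 1 ∧ k + 1 ≤ q s := by
  simp only [SameBlock, Fin.lt_def]
  refine ⟨fun h => ⟨?_, ?_⟩, fun h c hc => ?_⟩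
  · rcases Nat.eq_zero_or_pos (s - 1) with hs0 | hs0
    · rw [hs0, C.zero]
      omega
    · obtain ⟨c, hc, hcq⟩ := C.exists_mem_cutSet hs0 (by omega)
      have := h c hc
      omega
  · obtain ⟨c, hc, hcq⟩ := C.exists_mem_cutSet h1 (by omega)
    have := h c hc
    omega
  · obtain ⟨r, -, hr, hcr⟩ := mem_cutSet.1 hc
    rcases lt_or_ge r s with hrs | hrs
    · have := C.le_of_le (Nat.le_sub_one_of_lt hrs) (by omega)
      omega
    · have := C.le_of_le hrs hr
      omega

lemma IsCutSequence.not_inTail_iff (C : IsCutSequence n m q) :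
    ¬ InTail (cutSet n m q) k ↔ ∃ s, 1 ≤ s ∧ s < m ∧ q (s - 1) < k + 1 ∧ k + 1 ≤ q s := by
  rw [C.inTail_iff, not_lt]
  refine ⟨fun h => ?_, fun ⟨s, _, hs, _, hks⟩ =>
    hks.trans (C.le_of_le (Nat.le_sub_one_of_lt hs) le_rfl)⟩
  have hex : ∃ s, k + 1 ≤ q s := ⟨m - 1, h⟩
  have hpos : 1 ≤ Nat.find hex := (Nat.le_find_iff hex 1).2 fun r hr => by
    rw [Nat.lt_one_iff.1 hr, C.zero]
    omega
  have hle : Nat.find hex ≤ m - 1 := Nat.find_le h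
  exact ⟨Nat.find hex, hpos, by omega, not_le.1 (Nat.find_min hex (by omega)), Nat.find_spec hex⟩

end Cuts

section Standard

variable {n : ℕ} {t : BCD}

lemma simpleRoot_injective {E : Type*} [NormedAddCommGroup E] [InnerProductSpace ℝ E]
    (f : OrthonormalBasis (Fin n) ℝ E) (c : ℝ) : Function.Injective (simpleRoot t c f) := by
  suffices ∀ i j, i < j → simpleRoot t c f i ≠ simpleRoot t c f j from fun i j h =>
    by_contra fun hij => (lt_or_gt_of_ne hij).elim (this i j · h) (this j i · h.symm)
  intro i j hij h
  have hi : i.1 + 1 < n := by omega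
  have hi' : i ≠ ⟨i + 1, hi⟩ := by simp [Fin.ext_iff]
  rcases lt_or_ge (j.1 + 1) n with hj | hj
  · have hj' : i ≠ ⟨j + 1, hj⟩ := by
      rw [ne_eq, Fin.ext_iff]
      simp only
      omega
    have := congrArg (inner ℝ (f i)) h
    simp [simpleRoot_of_lt, hi, hj, inner_sub_right, hi', hij.ne, hj'] at this
  · rw [simpleRoot_of_lt hi, simpleRoot_last (by omega)] at h
    split_ifs at h
    · have hj' : j ≠ ⟨j - 1, by omega⟩ := by
        rw [ne_eq, Fin.ext_iff]
        simp only
        omega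
      have := congrArg (inner ℝ (f j)) h
      simp only [inner_sub_right, inner_add_right, OrthonormalBasis.inner_eq_ite, hij.ne', hj',
        if_false, if_true] at this
      split_ifs at this <;> norm_num at this
    · have := congrArg (inner ℝ (f i)) h
      simp [inner_sub_right, inner_smul_right, hi', hij.ne] at this

lemma exists_fin_add_one_eq {i : ℕ} (h0 : 1 ≤ i) (hi : i ≤ n) : ∃ k : Fin n, k.1 + 1 = i :=
  ⟨⟨i - 1, by omega⟩, Nat.sub_add_cancel h0⟩

lemma stdE_add_one (k : Fin n) : stdE n (k + 1) = EuclideanSpace.basisFun (Fin n) ℝ k := by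
  simp [stdE, Nat.succ_le_of_lt k.isLt]

lemma bcdAlpha_add_one (ht : t = .D → 2 ≤ n) (k : Fin n) :
    bcdAlpha t n (k + 1) = simpleRoot t (scale t) (EuclideanSpace.basisFun (Fin n) ℝ) k := by
  rcases lt_or_ge (k.1 + 1) n with hk | hk
  · rw [bcdAlpha.eq_def, if_pos hk, simpleRoot_of_lt hk, stdE_add_one, ← stdE_add_one ⟨k + 1, hk⟩]
  · have hkn : n = k + 1 := by omega
    have last : stdE n n = EuclideanSpace.basisFun (Fin n) ℝ k := by
      rw [← stdE_add_one, ← hkn]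
    rw [bcdAlpha.eq_def, if_neg hk.not_gt, simpleRoot_last hkn.symm]
    cases t with
    | B => simp [scale, last]
    | C => simp [scale, last]
    | D =>
      have := ht rfl
      have pen : stdE n (n - 1) = EuclideanSpace.basisFun (Fin n) ℝ ⟨k - 1, by omega⟩ := by
        rw [← stdE_add_one]
        congr 1
        simp only
        omega
      rw [if_pos rfl, last, pen]

lemma mem_bcdSimple_iff {v : EuclideanSpace ℝ (Fin n)} (hn : 1 ≤ n) :
    v ∈ bcdSimple t n ↔ ∃ k : Fin n, v = bcdAlpha t n (k + 1) := by
  have last : bcdAlpha t n n = match t with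
      | .B => stdE n n
      | .C => (2:ℝ) • stdE n n
      | .D => stdE n (n - 1) + stdE n n := by
    rw [bcdAlpha.eq_def, if_neg (lt_irrefl n)]
  constructor
  · rintro (⟨i, h1, hi, rfl⟩ | h)
    · obtain ⟨k, rfl⟩ := exists_fin_add_one_eq h1 hi.le
      exact ⟨k, by rw [bcdAlpha.eq_def, if_pos hi]⟩
    · obtain ⟨k, hk⟩ := exists_fin_add_one_eq hn le_rfl
      refine ⟨k, ?_⟩
      rw [hk, last]
      cases t <;> exact h
  · rintro ⟨k, rfl⟩
    rcases lt_or_ge (k.1 + 1) n with hk | hk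
    · exact .inl ⟨k + 1, Nat.le_add_left .., hk, by rw [bcdAlpha.eq_def, if_pos hk]⟩
    · rw [show k.1 + 1 = n by omega, last]
      right
      cases t <;> rfl

lemma mem_bcdPos_iff {v : EuclideanSpace ℝ (Fin n)} :
    v ∈ bcdPos t n ↔
      (∃ i j : Fin n, i < j ∧ ∃ ε : ℤˣ, v = EuclideanSpace.basisFun (Fin n) ℝ i +
        ε • EuclideanSpace.basisFun (Fin n) ℝ j) ∨
      t ≠ .D ∧ ∃ i, v = scale t • EuclideanSpace.basisFun (Fin n) ℝ i := by
  refine or_congr ⟨?_, ?_⟩ ?_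
  · rintro ⟨i, j, h1, hij, hj, h⟩
    obtain ⟨i, rfl⟩ := exists_fin_add_one_eq h1 (hij.le.trans hj)
    obtain ⟨j, rfl⟩ := exists_fin_add_one_eq (h1.trans hij.le) hj
    simp only [stdE_add_one] at h
    refine ⟨i, j, by omega, ?_⟩
    rcases h with h | h
    exacts [⟨-1, by simpa [sub_eq_add_neg] using h⟩, ⟨1, by simpa using h⟩]
  · rintro ⟨i, j, hij, ε, rfl⟩
    refine ⟨i + 1, j + 1, by omega, by omega, by omega, ?_⟩
    rw [stdE_add_one, stdE_add_one]
    rcases Int.units_eq_one_or ε with rfl | rfl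
    exacts [.inr (by simp), .inl (by simp [sub_eq_add_neg])]
  · have exists_iff {p : EuclideanSpace ℝ (Fin n) → Prop} : (∃ i, 1 ≤ i ∧ i ≤ n ∧ p (stdE n i)) ↔
        ∃ i, p (EuclideanSpace.basisFun (Fin n) ℝ i) := by
      refine ⟨fun ⟨i, h1, hi, h⟩ => ?_, fun ⟨i, h⟩ => ⟨i + 1, by omega, by omega, ?_⟩⟩
      · obtain ⟨i, rfl⟩ := exists_fin_add_one_eq h1 hi
        exact ⟨i, by rwa [stdE_add_one] at h⟩
      · rwa [stdE_add_one]
    cases t with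
    | B => simpa [scale] using exists_iff (p := (v = ·))
    | C => simpa [scale] using exists_iff (p := (v = (2 : ℝ) • ·))
    | D => simp

end Standard

section StandardFrame

variable {n m : ℕ} {t : BCD} {S : RootSys (EuclideanSpace ℝ (Fin n))}
  {I : Finset (EuclideanSpace ℝ (Fin n))} {q : ℕ → ℕ}

lemma bcdAlpha_self_mem_bcdSimple (t : BCD) (n : ℕ) : bcdAlpha t n n ∈ bcdSimple t n := by
  rw [bcdAlpha.eq_def, if_neg (lt_irrefl n)]
  cases t <;> exact .inr rfl

lemma one_le_of_simple_eq_bcdSimple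
    (hΔ : (S.Δ : Set (EuclideanSpace ℝ (Fin n))) = bcdSimple t n) : 1 ≤ n := by
  by_contra hn
  obtain rfl : n = 0 := by omega
  have hmem : bcdAlpha t 0 0 ∈ S.Δ := Finset.mem_coe.1 (hΔ ▸ bcdAlpha_self_mem_bcdSimple t 0)
  exact S.ne_zero _ (S.pos_subset (S.simple_subset hmem)) (Subsingleton.elim _ _)

lemma two_le_of_simple_eq_bcdSimple
    (hpos : (S.pos : Set (EuclideanSpace ℝ (Fin n))) = bcdPos t n)
    (hΔ : (S.Δ : Set (EuclideanSpace ℝ (Fin n))) = bcdSimple t n) (ht : t = .D) : 2 ≤ n := by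
  have hmem : bcdAlpha t n n ∈ S.Δ := Finset.mem_coe.1 (hΔ ▸ bcdAlpha_self_mem_bcdSimple t n)
  have hmem' := Finset.mem_coe.2 (S.simple_subset hmem)
  rw [hpos, mem_bcdPos_iff] at hmem'
  rcases hmem' with ⟨i, j, hij, -⟩ | ⟨hne, -⟩
  · omega
  · exact (hne ht).elim

lemma classicalFrame_basisFun (hpos : (S.pos : Set (EuclideanSpace ℝ (Fin n))) = bcdPos t n)
    (hΔ : (S.Δ : Set (EuclideanSpace ℝ (Fin n))) = bcdSimple t n) (hI : I ⊆ S.Δ)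
    (C : IsCutSequence n m q)
    (hcompl : (S.Δ : Set (EuclideanSpace ℝ (Fin n))) \ (I : Set (EuclideanSpace ℝ (Fin n))) =
      {v | ∃ s : ℕ, 1 ≤ s ∧ s ≤ m - 1 ∧ v = bcdAlpha t n (q s)}) :
    ClassicalFrame S I t (EuclideanSpace.basisFun (Fin n) ℝ) (cutSet n m q) := by
  have two_le := two_le_of_simple_eq_bcdSimple hpos hΔ
  have mem_Δ (v) : v ∈ S.Δ ↔ ∃ k : Fin n, v = bcdAlpha t n (k + 1) := by
    rw [← mem_bcdSimple_iff (one_le_of_simple_eq_bcdSimple hΔ), ← hΔ, Finset.mem_coe]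
  have inj {k k' : Fin n} (h : bcdAlpha t n (k + 1) = bcdAlpha t n (k' + 1)) : k = k' := by
    rw [bcdAlpha_add_one two_le, bcdAlpha_add_one two_le] at h
    exact simpleRoot_injective _ _ h
  have notMem_I (k : Fin n) : bcdAlpha t n (k + 1) ∉ I ↔ k ∈ cutSet n m q := by
    have h := Set.ext_iff.1 hcompl (bcdAlpha t n (k + 1))
    rw [Set.mem_sdiff, Finset.mem_coe, Finset.mem_coe,
      and_iff_right ((mem_Δ _).2 ⟨k, rfl⟩)] at h
    rw [h, mem_cutSet]
    refine exists_congr fun s => and_congr_right fun h1 => and_congr_right fun hs =>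
      ⟨fun h => ?_, fun h => by rw [h]⟩
    obtain ⟨c, -, hc⟩ := C.exists_mem_cutSet h1 hs
    rw [← hc] at h
    rw [← hc, inj h]
  refine ⟨fun v => ?_, fun v => ⟨fun hv => ?_, ?_⟩, two_le⟩
  · rw [← mem_bcdPos_iff, ← hpos, Finset.mem_coe]
  · obtain ⟨k, rfl⟩ := (mem_Δ v).1 (hI hv)
    exact ⟨k, fun hk => (notMem_I k).2 hk hv, bcdAlpha_add_one two_le k⟩
  · rintro ⟨k, hk, rfl⟩
    rw [← bcdAlpha_add_one two_le]
    exact not_not.1 fun h => hk ((notMem_I k).1 h)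

end StandardFrame

section StandardConditions

variable {n m s : ℕ} {t : BCD} {q : ℕ → ℕ} {i : Fin n} {l : HStar (EuclideanSpace ℝ (Fin n))}
  {β : EuclideanSpace ℝ (Fin n)}

lemma IsCutSequence.forall_sameBlock_iff (C : IsCutSequence n m q) (h1 : 1 ≤ s) (hs : s < m)
    (hi : q (s - 1) < i + 1) (his : i + 1 ≤ q s) {p : EuclideanSpace ℝ (Fin n) → Prop} :
    (∀ k, SameBlock (cutSet n m q) i k → p (EuclideanSpace.basisFun (Fin n) ℝ k)) ↔
      ∀ k, q (s - 1) < k → k ≤ q s → p (stdE n k) := by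
  simp only [C.sameBlock_iff h1 hs hi his, ← stdE_add_one]
  refine ⟨fun h k hk hks => ?_, fun h k hk => h _ hk.1 hk.2⟩
  have := (C.le_of_le (Nat.le_sub_one_of_lt hs) le_rfl).trans C.le
  obtain ⟨k, rfl⟩ := exists_fin_add_one_eq (by omega) (hks.trans this)
  exact h k ⟨hk, hks⟩

lemma IsCutSequence.forall_inTail_iff (C : IsCutSequence n m q)
    {p : EuclideanSpace ℝ (Fin n) → Prop} :
    (∀ k, InTail (cutSet n m q) k → p (EuclideanSpace.basisFun (Fin n) ℝ k)) ↔
      ∀ k, q (m - 1) < k → k ≤ n → p (stdE n k) := by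
  simp only [C.inTail_iff, ← stdE_add_one]
  refine ⟨fun h k hk hkn => ?_, fun h k hk => h _ hk k.isLt⟩
  obtain ⟨k, rfl⟩ := exists_fin_add_one_eq (by omega) hkn
  exact h k hk

lemma IsCutSequence.tailCase_iff (C : IsCutSequence n m q) :
    TailCase t (EuclideanSpace.basisFun (Fin n) ℝ) (cutSet n m q) l β ↔
      ∃ i j s : ℕ, 1 ≤ s ∧ s < m ∧ q (s - 1) < i ∧ i ≤ q s ∧ q s ≤ q (m - 1) ∧
        q (m - 1) < j ∧ j ≤ n ∧
        ((t = BCD.B ∧ (β = stdE n i ∨ β = stdE n i + stdE n j) ∧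
            (∃ k : ℤ, 0 < k ∧ l (stdE n i) = (k : ℂ) / 2)) ∨
         (t = BCD.C ∧ (β = (2 : ℝ) • stdE n i ∨ β = stdE n i + stdE n j) ∧
            (∃ k : ℤ, 0 < k ∧ l (stdE n i) = (k : ℂ)))) ∧
        l (stdE n j) = l (stdE n i) ∧
        (∀ k : ℕ, q (s - 1) < k → k ≤ q s →
          l (stdE n k) ≠ 0 ∧ l (stdE n k) ≠ -l (stdE n i)) := by
  have type_iff (i j : Fin n) :
      (t ≠ .D ∧ (β = scale t • stdE n (i + 1) ∨ β = stdE n (i + 1) + stdE n (j + 1)) ∧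
        IsPosInt (l ((2 / scale t) • stdE n (i + 1)))) ↔
      ((t = BCD.B ∧ (β = stdE n (i + 1) ∨ β = stdE n (i + 1) + stdE n (j + 1)) ∧
          (∃ k : ℤ, 0 < k ∧ l (stdE n (i + 1)) = (k : ℂ) / 2)) ∨
       (t = BCD.C ∧ (β = (2 : ℝ) • stdE n (i + 1) ∨ β = stdE n (i + 1) + stdE n (j + 1)) ∧
          (∃ k : ℤ, 0 < k ∧ l (stdE n (i + 1)) = (k : ℂ)))) := by
    cases t <;> simp [scale, IsPosInt, eq_div_iff, mul_comm]
  constructor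
  · rintro ⟨ht, i, j, hi, hj, hβ, hpos, hij, hk⟩
    obtain ⟨s, h1, hs, his, his'⟩ := C.not_inTail_iff.1 hi
    have hk' := (C.forall_sameBlock_iff h1 hs his his'
      (p := fun v => l v ≠ 0 ∧ l v ≠ -l (EuclideanSpace.basisFun (Fin n) ℝ i))).1 hk
    simp only [← stdE_add_one] at hβ hpos hij hk'
    exact ⟨i + 1, j + 1, s, h1, hs, his, his', C.le_of_le (Nat.le_sub_one_of_lt hs) le_rfl,
      C.inTail_iff.1 hj, j.isLt, (type_iff i j).1 ⟨ht, hβ, hpos⟩, hij, hk'⟩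
  · rintro ⟨i, j, s, h1, hs, his, his', hsm, hj, hjn, htype, hij, hk⟩
    obtain ⟨i, rfl⟩ := exists_fin_add_one_eq (by omega) ((his'.trans hsm).trans C.le)
    obtain ⟨j, rfl⟩ := exists_fin_add_one_eq (by omega) hjn
    obtain ⟨ht, hβ, hpos⟩ := (type_iff i j).2 htype
    have hk' := (C.forall_sameBlock_iff h1 hs his his'
      (p := fun v => l v ≠ 0 ∧ l v ≠ -l (stdE n (i + 1)))).2 hk
    simp only [stdE_add_one] at hβ hpos hij hk'
    exact ⟨ht, i, j, C.not_inTail_iff.2 ⟨s, h1, hs, his, his'⟩, C.inTail_iff.2 hj, hβ, hpos, hij,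
      hk'⟩

lemma IsCutSequence.zeroCase_iff (C : IsCutSequence n m q) :
    ZeroCase t (EuclideanSpace.basisFun (Fin n) ℝ) (cutSet n m q) l β ↔
      ∃ i j s : ℕ, 1 ≤ s ∧ s < m ∧ q (s - 1) < i ∧ i < j ∧ j ≤ q s ∧
        ((t = BCD.B ∧ (β = stdE n i ∨ β = stdE n i + stdE n j)) ∨
         (t = BCD.C ∧ (β = (2 : ℝ) • stdE n i ∨ β = stdE n i + stdE n j))) ∧
        (∃ k : ℤ, 0 < k ∧ l (stdE n i) = (k : ℂ)) ∧
        l (stdE n j) = 0 ∧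
        (∀ k : ℕ, q (s - 1) < k → k ≤ q s → l (stdE n k) ≠ -l (stdE n i)) ∧
        (∀ k : ℕ, q (m - 1) < k → k ≤ n → l (stdE n k) ≠ l (stdE n i)) := by
  have type_iff (i j : Fin n) :
      (t ≠ .D ∧ (β = scale t • stdE n (i + 1) ∨ β = stdE n (i + 1) + stdE n (j + 1))) ↔
      ((t = BCD.B ∧ (β = stdE n (i + 1) ∨ β = stdE n (i + 1) + stdE n (j + 1))) ∨
       (t = BCD.C ∧ (β = (2 : ℝ) • stdE n (i + 1) ∨
          β = stdE n (i + 1) + stdE n (j + 1)))) := by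
    cases t <;> simp [scale]
  constructor
  · rintro ⟨ht, i, j, hi, hij, hj, hβ, hpos, hj0, hk, hk'⟩
    obtain ⟨s, h1, hs, his, his'⟩ := C.not_inTail_iff.1 hi
    replace hk := (C.forall_sameBlock_iff h1 hs his his'
      (p := fun v => l v ≠ -l (EuclideanSpace.basisFun (Fin n) ℝ i))).1 hk
    replace hk' := (C.forall_inTail_iff
      (p := fun v => l v ≠ l (EuclideanSpace.basisFun (Fin n) ℝ i))).1 hk'
    simp only [← stdE_add_one] at hβ hpos hj0 hk hk'
    exact ⟨i + 1, j + 1, s, h1, hs, his, by omega, ((C.sameBlock_iff h1 hs his his').1 hj).2,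
      (type_iff i j).1 ⟨ht, hβ⟩, hpos, hj0, hk, hk'⟩
  · rintro ⟨i, j, s, h1, hs, his, hij, hj, htype, hpos, hj0, hk, hk'⟩
    have hsm := (C.le_of_le (Nat.le_sub_one_of_lt hs) le_rfl).trans C.le
    obtain ⟨i, rfl⟩ := exists_fin_add_one_eq (i := i) (n := n) (by omega) (by omega)
    obtain ⟨j, rfl⟩ := exists_fin_add_one_eq (i := j) (n := n) (by omega) (by omega)
    have his' : i.1 + 1 ≤ q s := hij.le.trans hj
    obtain ⟨ht, hβ⟩ := (type_iff i j).2 htype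
    replace hk := (C.forall_sameBlock_iff h1 hs his his'
      (p := fun v => l v ≠ -l (stdE n (i + 1)))).2 hk
    replace hk' := (C.forall_inTail_iff (p := fun v => l v ≠ l (stdE n (i + 1)))).2 hk'
    simp only [stdE_add_one] at hβ hpos hj0 hk hk'
    exact ⟨ht, i, j, C.not_inTail_iff.2 ⟨s, h1, hs, his, his'⟩, by omega,
      (C.sameBlock_iff h1 hs his his').2 ⟨by omega, hj⟩, hβ, hpos, hj0, hk, hk'⟩

lemma IsCutSequence.zeroTailCase_iff (C : IsCutSequence n m q) :
    ZeroTailCase t (EuclideanSpace.basisFun (Fin n) ℝ) (cutSet n m q) l β ↔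
      t = BCD.D ∧ ∃ i j k s : ℕ, 1 ≤ s ∧ s < m ∧ q (s - 1) < i ∧ i < j ∧ j ≤ q s ∧
        q s ≤ q (m - 1) ∧ q (m - 1) < k ∧ k < n ∧
        (β = stdE n i + stdE n j ∨ β = stdE n i + stdE n k) ∧
        l (stdE n k) = l (stdE n i) ∧
        (∃ z : ℤ, 0 < z ∧ l (stdE n i) = (z : ℂ)) ∧
        l (stdE n j) = 0 ∧ l (stdE n n) = 0 ∧
        (∀ k : ℕ, q (s - 1) < k → k ≤ q s → l (stdE n k) ≠ -l (stdE n i)) := by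
  refine and_congr_right fun _ => ⟨?_, ?_⟩
  · rintro ⟨i, j, k, z, hi, hij, hj, hk, hkz, hz, hβ, hki, hpos, hj0, hz0, hne⟩
    obtain ⟨s, h1, hs, his, his'⟩ := C.not_inTail_iff.1 hi
    replace hne := (C.forall_sameBlock_iff h1 hs his his'
      (p := fun v => l v ≠ -l (EuclideanSpace.basisFun (Fin n) ℝ i))).1 hne
    simp only [← stdE_add_one, hz] at hβ hki hpos hj0 hz0 hne
    exact ⟨i + 1, j + 1, k + 1, s, h1, hs, his, by omega,
      ((C.sameBlock_iff h1 hs his his').1 hj).2, C.le_of_le (Nat.le_sub_one_of_lt hs) le_rfl,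
      C.inTail_iff.1 hk, by omega, hβ, hki, hpos, hj0, hz0, hne⟩
  · rintro ⟨i, j, k, s, h1, hs, his, hij, hj, hsm, hk, hkn, hβ, hki, hpos, hj0, hz0, hne⟩
    obtain ⟨i, rfl⟩ := exists_fin_add_one_eq (i := i) (n := n) (by omega) (by omega)
    obtain ⟨j, rfl⟩ := exists_fin_add_one_eq (i := j) (n := n) (by omega) (by omega)
    obtain ⟨k, rfl⟩ := exists_fin_add_one_eq (i := k) (n := n) (by omega) hkn.le
    obtain ⟨z, hz⟩ := exists_fin_add_one_eq (i := n) (n := n) (by omega) le_rfl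
    have his' : i.1 + 1 ≤ q s := hij.le.trans hj
    replace hne := (C.forall_sameBlock_iff h1 hs his his'
      (p := fun v => l v ≠ -l (stdE n (i + 1)))).2 hne
    have hz0' : l (stdE n (z + 1)) = 0 := by rw [hz, hz0]
    simp only [stdE_add_one] at hβ hki hpos hj0 hz0' hne
    exact ⟨i, j, k, z, C.not_inTail_iff.2 ⟨s, h1, hs, his, his'⟩, by omega,
      (C.sameBlock_iff h1 hs his his').2 ⟨by omega, hj⟩, C.inTail_iff.2 hk, by omega, hz, hβ, hki,
      hpos, hj0, hz0', hne⟩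

end StandardConditions

/-- Theorem D (vanishing of Jantzen coefficients in the classical types `B_n`, `C_n`,
`D_n`, in the standard realization in `ℝ^n`):  let `Δ \ I = {α_{q_1}, …, α_{q_{m-1}}}`
with `0 = q_0 < q_1 < ⋯ < q_{m-1} ≤ n`, let `λ, μ ∈ Λ_I⁺` with `μ = w s_β λ` for some
`w ∈ W_I` and `β ∈ Ψ_λ⁺⁺`.  Then `c(λ, μ) = 0` iff one of the conditions (i), (ii),
(iii) below holds. -/
theorem statement_17 (n : ℕ) (t : BCD)
    (S : RootSys (EuclideanSpace ℝ (Fin n)))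
    (hΦ : (S.Φ : Set (EuclideanSpace ℝ (Fin n))) = bcdRoots t n)
    (hpos : (S.pos : Set (EuclideanSpace ℝ (Fin n))) = bcdPos t n)
    (hΔ : (S.Δ : Set (EuclideanSpace ℝ (Fin n))) = bcdSimple t n)
    (I : Finset (EuclideanSpace ℝ (Fin n))) (hI : I ⊆ S.Δ)
    (m : ℕ) (hm : 1 ≤ m) (q : ℕ → ℕ) (hq0 : q 0 = 0)
    (hmono : ∀ s : ℕ, 1 ≤ s → s ≤ m - 1 → q (s - 1) < q s)
    (hqn : q (m - 1) ≤ n)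
    (hcompl : (S.Δ : Set (EuclideanSpace ℝ (Fin n))) \ (I : Set (EuclideanSpace ℝ (Fin n))) =
      {v | ∃ s : ℕ, 1 ≤ s ∧ s ≤ m - 1 ∧ v = bcdAlpha t n (q s)})
    (lam mu : HStar (EuclideanSpace ℝ (Fin n)))
    (hlam : lam ∈ LambdaP (I : Set (EuclideanSpace ℝ (Fin n))))
    (hmu : mu ∈ LambdaP (I : Set (EuclideanSpace ℝ (Fin n))))
    (w : EuclideanSpace ℝ (Fin n) ≃ₗ[ℝ] EuclideanSpace ℝ (Fin n))
    (hw : w ∈ weyl (PhiI S I))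
    (β : EuclideanSpace ℝ (Fin n))
    (hβ : β ∈ PsiPP S (PhiI S I) (S.Φ : Set (EuclideanSpace ℝ (Fin n))) lam)
    (hmuw : mu = wAct w (sRefl β lam)) :
    jc S (PhiI S I) (S.Φ : Set (EuclideanSpace ℝ (Fin n))) lam mu = 0 ↔
      -- (i)  Φ = B_n (resp. C_n), β = e_i (resp. 2e_i) or e_i + e_j with
      --      q_{s-1} < i ≤ q_s ≤ q_{m-1} < j ≤ n; λ_i = λ_j ∈ ½ℤ_{>0} (resp. ℤ_{>0})
      --      and λ_k ∉ {0, -λ_i} for q_{s-1} < k ≤ q_s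
      (∃ i j s : ℕ, 1 ≤ s ∧ s < m ∧ q (s - 1) < i ∧ i ≤ q s ∧ q s ≤ q (m - 1) ∧
        q (m - 1) < j ∧ j ≤ n ∧
        ((t = BCD.B ∧ (β = stdE n i ∨ β = stdE n i + stdE n j) ∧
            (∃ k : ℤ, 0 < k ∧ lam (stdE n i) = (k : ℂ) / 2)) ∨
         (t = BCD.C ∧ (β = (2 : ℝ) • stdE n i ∨ β = stdE n i + stdE n j) ∧
            (∃ k : ℤ, 0 < k ∧ lam (stdE n i) = (k : ℂ)))) ∧
        lam (stdE n j) = lam (stdE n i) ∧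
        (∀ k : ℕ, q (s - 1) < k → k ≤ q s →
          lam (stdE n k) ≠ 0 ∧ lam (stdE n k) ≠ -lam (stdE n i))) ∨
      -- (ii) Φ = B_n (resp. C_n), β = e_i (resp. 2e_i) or e_i + e_j with
      --      q_{s-1} < i < j ≤ q_s; λ_i ∈ ℤ_{>0}, λ_j = 0, λ_k ≠ -λ_i for
      --      q_{s-1} < k ≤ q_s and λ_l ≠ λ_i for q_{m-1} < l ≤ n
      (∃ i j s : ℕ, 1 ≤ s ∧ s < m ∧ q (s - 1) < i ∧ i < j ∧ j ≤ q s ∧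
        ((t = BCD.B ∧ (β = stdE n i ∨ β = stdE n i + stdE n j)) ∨
         (t = BCD.C ∧ (β = (2 : ℝ) • stdE n i ∨ β = stdE n i + stdE n j))) ∧
        (∃ k : ℤ, 0 < k ∧ lam (stdE n i) = (k : ℂ)) ∧
        lam (stdE n j) = 0 ∧
        (∀ k : ℕ, q (s - 1) < k → k ≤ q s → lam (stdE n k) ≠ -lam (stdE n i)) ∧
        (∀ l : ℕ, q (m - 1) < l → l ≤ n → lam (stdE n l) ≠ lam (stdE n i))) ∨
      -- (iii) Φ = D_n, β = e_i + e_j or e_i + e_k with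
      --      q_{s-1} < i < j ≤ q_s ≤ q_{m-1} < k < n; λ_i = λ_k ∈ ℤ_{>0},
      --      λ_j = λ_n = 0 and λ_l ≠ -λ_i for q_{s-1} < l ≤ q_s
      (t = BCD.D ∧ ∃ i j k s : ℕ, 1 ≤ s ∧ s < m ∧ q (s - 1) < i ∧ i < j ∧ j ≤ q s ∧
        q s ≤ q (m - 1) ∧ q (m - 1) < k ∧ k < n ∧
        (β = stdE n i + stdE n j ∨ β = stdE n i + stdE n k) ∧
        lam (stdE n k) = lam (stdE n i) ∧
        (∃ z : ℤ, 0 < z ∧ lam (stdE n i) = (z : ℂ)) ∧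
        lam (stdE n j) = 0 ∧ lam (stdE n n) = 0 ∧
        (∀ l : ℕ, q (s - 1) < l → l ≤ q s → lam (stdE n l) ≠ -lam (stdE n i))) := by
  have C : IsCutSequence n m q := ⟨hq0, hmono, hqn⟩
  exact (statement_17_general (classicalFrame_basisFun hpos hΔ hI C hcompl) hlam
    (mem_linkedRoots.2 ⟨hβ, w, hw, hmuw⟩)).trans
    (or_congr C.tailCase_iff (or_congr C.zeroCase_iff C.zeroTailCase_iff))

end JantzenGVM
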